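/- arXiv:2104.05455 — 6 statements merged into one kernel-verified Lean document; each statement's English description precedes it below -/
import Mathlib

section
/- Let K be a field and p a prime ideal of K[T,Y] (T an r-tuple, Y an s-tuple of variables) with p ∩ K[T] = {0}, and let d be the Krull dimension of K(T)[Y]/p̃, where p̃ is the extension of p to K(T)[Y]; assume d > 0. Fix an integer ρ with 0 < ρ ≤ r and nonnegative integers D_1,…,D_ρ; for i = 1,…,ρ let Q_i(Λ_i,T,Y) = U_{D_i}(Λ_i,Y) − T_i, where U_{D_i}(Λ_i,Y) is the generic polynomial of degree D_i in Y with parameter tuple Λ_i, the Λ_i pairwise disjoint; write ΛΛ = (Λ_1,…,Λ_ρ). Then the ideal P = ⟨p, Q_1,…,Q_ρ⟩ of K[ΛΛ,T,Y] is prime, P ∩ K[ΛΛ] = {0}, and the extension of P to K(ΛΛ)[T,Y] is a prime ideal with K(ΛΛ)[T,Y] modulo it of Krull dimension d + r − ρ. -/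
open MvPolynomial

noncomputable section

/-- The rational function field `K(T)` with variables indexed by `ι`,
realized as the fraction field of the polynomial ring. -/
abbrev RatFuncField (K : Type) [Field K] (ι : Type) : Type := FractionRing (MvPolynomial ι K)

/-- `x ∈ K(T)` can be specialized at `t ∈ K^ι` with value `v`:
there is a representation `x = a/b` with `b(t) ≠ 0` and `v = a(t)/b(t)`. -/
def RatSpecializesTo (K : Type) [Field K] {ι : Type} (t : ι → K)
    (x : RatFuncField K ι) (v : K) : Prop :=
  ∃ a b : MvPolynomial ι K, MvPolynomial.eval t b ≠ 0 ∧
    algebraMap (MvPolynomial ι K) (RatFuncField K ι) b * x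
      = algebraMap (MvPolynomial ι K) (RatFuncField K ι) a ∧
    MvPolynomial.eval t b * v = MvPolynomial.eval t a

/-- `P ∈ K(T)[Y]` specializes at `t` (coefficientwise) to `q ∈ K[Y]`. -/
def PolySpecializesTo (K : Type) [Field K] {ι : Type} {s : ℕ} (t : ι → K)
    (P : MvPolynomial (Fin s) (RatFuncField K ι)) (q : MvPolynomial (Fin s) K) : Prop :=
  ∀ mono : Fin s →₀ ℕ, RatSpecializesTo K t (P.coeff mono) (q.coeff mono)

/-- `H` is a Hilbert subset of `K^ι`: the set of points where finitely many irreducible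
polynomials of `K(T)[Y]` specialize to irreducible polynomials of `K[Y]`, intersected
with a nonempty Zariski-open subset. -/
def IsHilbertSubset (K : Type) [Field K] (ι : Type) (H : Set (ι → K)) : Prop :=
  ∃ (s l n : ℕ) (p : Fin l → MvPolynomial (Fin s) (RatFuncField K ι))
    (g : Fin n → MvPolynomial ι K),
    (∀ i, Irreducible (p i)) ∧
    (∃ t : ι → K, ∃ j, MvPolynomial.eval t (g j) ≠ 0) ∧
    H = {t | (∃ j, MvPolynomial.eval t (g j) ≠ 0) ∧
      ∀ i, ∃ q : MvPolynomial (Fin s) K, PolySpecializesTo K t (p i) q ∧ Irreducible q}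

/-- A subset of `K^ι` is Zariski-dense iff for every nonzero polynomial `g` it contains a
point where `g` does not vanish. -/
def IsZariskiDense (K : Type) [Field K] {ι : Type} (S : Set (ι → K)) : Prop :=
  ∀ g : MvPolynomial ι K, g ≠ 0 → ∃ t ∈ S, MvPolynomial.eval t g ≠ 0

/-- A field is Hilbertian if all its Hilbert subsets (of all `K^r`, `r ≥ 1`) are
Zariski-dense. -/
def IsHilbertianField (K : Type) [Field K] : Prop :=
  ∀ r : ℕ, 0 < r → ∀ H : Set (Fin r → K), IsHilbertSubset K (Fin r) H → IsZariskiDense K H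

/-- The canonical ring homomorphism `K[T,Y] → K(T)[Y]`. -/
def extHom (K : Type) [Field K] (r s : ℕ) :
    MvPolynomial (Fin r ⊕ Fin s) K →+* MvPolynomial (Fin s) (RatFuncField K (Fin r)) :=
  MvPolynomial.eval₂Hom
    ((MvPolynomial.C).comp
      ((algebraMap (MvPolynomial (Fin r) K) (RatFuncField K (Fin r))).comp MvPolynomial.C))
    (Sum.elim
      (fun i => MvPolynomial.C
        (algebraMap (MvPolynomial (Fin r) K) (RatFuncField K (Fin r)) (MvPolynomial.X i)))
      (fun j => MvPolynomial.X j))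

/-- The specialization homomorphism `K[T,Y] → K[Y]`, `T ↦ t`. -/
def specHom (K : Type) [Field K] {r s : ℕ} (t : Fin r → K) :
    MvPolynomial (Fin r ⊕ Fin s) K →+* MvPolynomial (Fin s) K :=
  MvPolynomial.eval₂Hom MvPolynomial.C
    (Sum.elim (fun i => MvPolynomial.C (t i)) (fun j => MvPolynomial.X j))

/-- `L` is a separable extension of `F` in the general sense (equivalently, `L` is
linearly disjoint from the perfect closure of `F`, equivalently `L ⊗_F F̄` is reduced);
the extension is given by the ring homomorphism `f : F → L`. -/
def IsSepExtOfHom (F L : Type) [Field F] [CommRing L] (f : F →+* L) : Prop :=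
  letI : Algebra F L := f.toAlgebra
  IsReduced (TensorProduct F (AlgebraicClosure F) L)

/-- `Frac(A)` is a separable extension of `F` in the general sense. -/
def IsSepOverBase (F : Type) [Field F] (A : Type) [CommRing A] [Algebra F A] : Prop :=
  IsSepExtOfHom F (FractionRing A) ((algebraMap A (FractionRing A)).comp (algebraMap F A))

/-- The height of an ideal: the infimum over primes containing it of the lengths of
chains of primes below.  For a prime ideal this is the usual height. -/
def idealHeight {R : Type} [CommRing R] (I : Ideal R) : ℕ∞ :=
  ⨅ p : {q : PrimeSpectrum R // I ≤ q.asIdeal}, Order.height p.1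

/-- The monomials in `s` variables of total degree at most `D`. -/
def MonLE (s D : ℕ) : Type := {m : Fin s →₀ ℕ // m.degree ≤ D}

noncomputable instance (s D : ℕ) : Fintype (MonLE s D) :=
  (Finsupp.finite_of_degree_le D).fintype

/-- The generic polynomial of degree `D`, with parameter variables `v m`, `m` a monomial of
degree at most `D`, as an element of `K[Λ][Y]`. -/
def genPoly (K : Type) [Field K] (s D : ℕ) {Λ : Type} (v : MonLE s D → Λ) :
    MvPolynomial (Fin s) (MvPolynomial Λ K) :=
  ∑ m : MonLE s D, MvPolynomial.monomial m.1 (MvPolynomial.X (v m))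

/-- The generic polynomial of degree `D` specialized at `lam ∈ K^{N_D}`. -/
def genPolyAt (K : Type) [Field K] (s D : ℕ) (lam : MonLE s D → K) :
    MvPolynomial (Fin s) K :=
  ∑ m : MonLE s D, MvPolynomial.monomial m.1 (lam m)

/-- Substitution `T_i ↦ U_i(Y)` as a ring homomorphism `K[T,Y] → K[Y]`. -/
def polySubstHom (K : Type) [Field K] {r s : ℕ} (U : Fin r → MvPolynomial (Fin s) K) :
    MvPolynomial (Fin r ⊕ Fin s) K →+* MvPolynomial (Fin s) K :=
  MvPolynomial.eval₂Hom MvPolynomial.C (Sum.elim U (fun j => MvPolynomial.X j))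

/-- The quasi-generic polynomial `Q_{S,R}(Λ,Y) = ∑_i Λ_i Q_i(Y) + R(Y)` of base `(S,R)`,
where `S = {monomial (m 0), …, monomial (m n)}`, as an element of `K[Λ][Y]`. -/
def quasiGen (K : Type) [Field K] {s n : ℕ} (m : Fin (n + 1) → (Fin s →₀ ℕ))
    (R : MvPolynomial (Fin s) K) :
    MvPolynomial (Fin s) (MvPolynomial (Fin (n + 1)) K) :=
  (∑ i, MvPolynomial.monomial (m i) (MvPolynomial.X i)) +
    MvPolynomial.map (MvPolynomial.C) R

/-- Hypothesis (H) for the triple `(p, S, R)` (with `S` the set of monomials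
`monomial (m i)`, `m 0 = 0`): the map `φ_{S,R}` sending `(a_1,…,a_n)` to the class mod `E`
of `∑_{i ≥ 1} a_i Q_i(Y) + R(Y)` in `B/E` is not identically zero, where `B = K[Y]/p` and
`E ⊆ B` is the subfield of elements algebraic over `K`. -/
def HypothesisH (K : Type) [Field K] {s n : ℕ} (p : Ideal (MvPolynomial (Fin s) K))
    (m : Fin (n + 1) → (Fin s →₀ ℕ)) (R : MvPolynomial (Fin s) K) : Prop :=
  ∃ a : Fin (n + 1) → K,
    Ideal.Quotient.mk p ((∑ i ∈ Finset.univ.erase 0, MvPolynomial.monomial (m i) (a i)) + R)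
      ∉ integralClosure K (MvPolynomial (Fin s) K ⧸ p)


/-- The index type of the parameters `ΛΛ = (Λ_1,…,Λ_ρ)`. -/
def LamIdx (s ρ : ℕ) (D : Fin ρ → ℕ) : Type := (i : Fin ρ) × MonLE s (D i)

/-- The quasi-generic polynomial `Q_i(Λ_i,T,Y) = U_{D_i}(Λ_i,Y) − T_i`, an element of
`K[ΛΛ][T,Y]`. -/
def quasiGenT (K : Type) [Field K] (r s ρ : ℕ) (hρr : ρ ≤ r) (D : Fin ρ → ℕ) (i : Fin ρ) :
    MvPolynomial (Fin r ⊕ Fin s) (MvPolynomial (LamIdx s ρ D) K) :=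
  (∑ mo : MonLE s (D i),
    MvPolynomial.monomial (Finsupp.mapDomain Sum.inr mo.1)
      (MvPolynomial.X (⟨i, mo⟩ : LamIdx s ρ D))) -
  MvPolynomial.X (Sum.inl (Fin.castLE hρr i))

/-- The ideal `P = ⟨p, Q_1,…,Q_ρ⟩` of `K[ΛΛ,T,Y]`. -/
def PIdeal (K : Type) [Field K] (r s ρ : ℕ) (hρr : ρ ≤ r) (D : Fin ρ → ℕ)
    (p : Ideal (MvPolynomial (Fin r ⊕ Fin s) K)) :
    Ideal (MvPolynomial (Fin r ⊕ Fin s) (MvPolynomial (LamIdx s ρ D) K)) :=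
  Ideal.map (MvPolynomial.map (MvPolynomial.C : K →+* MvPolynomial (LamIdx s ρ D) K)) p ⊔
    Ideal.span (Set.range (quasiGenT K r s ρ hρr D))

/-!
The unit monomial occurs in each generic polynomial, so `Q_i = 0` can be solved for its coefficient
`Λ_{i,0}`, and eliminating these coefficients gives `K[Λ,T,Y]/P ≅ (K[T,Y]/p)[Λ']`, with `Λ'` the
remaining parameters. Hence `P` is prime. Modulo `P` the eliminated coefficients become polynomials
in `Λ'` whose constant terms `T_i` are algebraically independent over `K`, so that `Λ` remains
algebraically independent and `P ∩ K[Λ] = 0`. Finally, passing to a generic fibre lowers the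
dimension by the number of variables inverted, because the dimension of an affine domain is its
transcendence degree; this is applied both to `K[T] ⊆ K[T,Y]/p` and to `K[Λ] ⊆ K[Λ,T,Y]/P`.
-/

theorem ringKrullDim_eq_of_isIntegral (R S : Type*) [CommRing R] [CommRing S] [Algebra R S]
    [Algebra.IsIntegral R S] [FaithfulSMul R S] : ringKrullDim S = ringKrullDim R := by
  apply le_antisymm
  · exact Order.krullDim_le_of_strictMono (PrimeSpectrum.comap (algebraMap R S))
      fun _ _ hIJ ↦ Ideal.IsIntegral.comap_lt_comap hIJ
  · refine iSup_le fun chain ↦ ?_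
    obtain ⟨Q, -, _, hQ⟩ := Ideal.exists_ideal_over_prime_of_isIntegral
      (S := S) chain.head.asIdeal ⊥ (by
        rw [← RingHom.ker_eq_comap_bot,
          (RingHom.injective_iff_ker_eq_bot _).mp (FaithfulSMul.algebraMap_injective R S)]
        exact bot_le)
    have : Q.LiesOver chain.head.asIdeal := ⟨hQ.symm⟩
    obtain ⟨lifted, hlifted, -, -⟩ := Ideal.exists_ltSeries_of_hasGoingUp chain Q
    rw [← hlifted]
    exact le_iSup (fun L : LTSeries (PrimeSpectrum S) ↦ (L.length : WithBot ℕ∞)) lifted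

theorem toENat_trdeg_add_eq (R S A : Type*) [CommRing R] [CommRing S] [CommRing A]
    [Algebra R S] [Algebra R A] [Algebra S A] [IsScalarTower R S A] [Nontrivial R]
    [NoZeroDivisors A] [FaithfulSMul R S] [FaithfulSMul S A] :
    Cardinal.toENat (Algebra.trdeg R S) + Cardinal.toENat (Algebra.trdeg S A) =
      Cardinal.toENat (Algebra.trdeg R A) := by
  simpa using congrArg Cardinal.toENat (lift_trdeg_add_eq R S A)

theorem toENat_trdeg_eq_of_isAlgebraic (R S A : Type*) [CommRing R] [CommRing S] [CommRing A]
    [Algebra R S] [Algebra R A] [Algebra S A] [IsScalarTower R S A] [Nontrivial R]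
    [NoZeroDivisors A] [FaithfulSMul R S] [FaithfulSMul S A] [Algebra.IsAlgebraic S A] :
    Cardinal.toENat (Algebra.trdeg R A) = Cardinal.toENat (Algebra.trdeg R S) := by
  rw [← toENat_trdeg_add_eq R S A, trdeg_eq_zero (R := S), map_zero, add_zero]

theorem ringKrullDim_eq_toENat_trdeg (k A : Type*) [Field k] [CommRing A] [IsDomain A]
    [Algebra k A] [Algebra.FiniteType k A] :
    ringKrullDim A = (Cardinal.toENat (Algebra.trdeg k A) : WithBot ℕ∞) := by
  obtain ⟨n, g, hg, hint⟩ := exists_integral_inj_algHom_of_fg k A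
  algebraize [g.toRingHom]
  have : Algebra.IsIntegral (MvPolynomial (Fin n) k) A := ⟨hint⟩
  have : IsScalarTower k (MvPolynomial (Fin n) k) A :=
    IsScalarTower.of_algebraMap_eq fun x ↦ (g.commutes x).symm
  have : FaithfulSMul (MvPolynomial (Fin n) k) A :=
    (faithfulSMul_iff_algebraMap_injective _ _).mpr hg
  rw [ringKrullDim_eq_of_isIntegral (MvPolynomial (Fin n) k) A, ringKrullDim_of_isNoetherianRing,
    toENat_trdeg_eq_of_isAlgebraic k (MvPolynomial (Fin n) k) A]
  simp

theorem ringKrullDim_add_eq_of_isAlgebraic (k R A F B : Type*) [Field k] [Field F]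
    [CommRing R] [IsDomain R] [CommRing A] [IsDomain A] [CommRing B] [IsDomain B]
    [Algebra k R] [Algebra k F] [Algebra k A] [Algebra k B] [Algebra R F] [Algebra A B]
    [Algebra F B] [IsScalarTower k R F] [IsScalarTower k A B] [IsScalarTower k F B]
    [Algebra.FiniteType k R] [Algebra.FiniteType k A] [Algebra.FiniteType F B]
    [FaithfulSMul R F] [FaithfulSMul A B] [Algebra.IsAlgebraic R F] [Algebra.IsAlgebraic A B] :
    ringKrullDim B + ringKrullDim R = ringKrullDim A := by
  rw [ringKrullDim_eq_toENat_trdeg F B, ringKrullDim_eq_toENat_trdeg k R,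
    ringKrullDim_eq_toENat_trdeg k A, ← toENat_trdeg_eq_of_isAlgebraic k A B,
    ← toENat_trdeg_eq_of_isAlgebraic k R F, ← toENat_trdeg_add_eq k F B, add_comm, WithBot.coe_add]

section LocalizedQuotient

variable {R : Type*} (S : Type*) [CommRing R] [CommRing S] [Algebra R S] {Q : Ideal R} [Q.IsPrime]

theorem faithfulSMul_quotient_map_of_isLocalization {M : Submonoid R} [IsLocalization M S]
    (hQ : Disjoint (M : Set R) Q) :
    FaithfulSMul (R ⧸ Q) (S ⧸ Q.map (algebraMap R S)) :=
  (faithfulSMul_iff_algebraMap_injective _ _).mpr <| Ideal.quotientMap_injective'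
    (H := Ideal.le_comap_map) (IsLocalization.under_map_of_isPrime_disjoint M S ‹_› hQ).le

theorem isAlgebraic_quotient_map_of_isLocalization (M : Submonoid R) [IsLocalization M S] :
    Algebra.IsAlgebraic (R ⧸ Q) (S ⧸ Q.map (algebraMap R S)) :=
  IsLocalization.isAlgebraic _ (Algebra.algebraMapSubmonoid (R ⧸ Q) M)

end LocalizedQuotient

section GenericFiber

variable {R : Type*} [CommRing R] (F : Type*) [CommRing F] [Algebra R F] {σ : Type*}

/-- The extension to `F[σ]` of an ideal of `R[σ]`. For `F` the fraction field of `R` it is the ideal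
of the generic fibre of `V(Q)` over `Spec R`. -/
abbrev genericFiber (Q : Ideal (MvPolynomial σ R)) : Ideal (MvPolynomial σ F) :=
  Q.map (MvPolynomial.map (algebraMap R F))

variable {Q : Ideal (MvPolynomial σ R)}

theorem disjoint_map_C_nonZeroDivisors [Nontrivial R] (hQ : ∀ g : R, C g ∈ Q → g = 0) :
    Disjoint ((nonZeroDivisors R).map (C (σ := σ)) : Set (MvPolynomial σ R)) Q := by
  rw [Set.disjoint_left]
  rintro _ ⟨g, hg, rfl⟩ hgQ
  exact nonZeroDivisors.ne_zero hg (hQ g hgQ)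

attribute [local instance] algebraMvPolynomial

theorem genericFiber_eq_map_algebraMap :
    genericFiber F Q = Q.map (algebraMap (MvPolynomial σ R) (MvPolynomial σ F)) := rfl

variable [IsDomain R] [Q.IsPrime]

theorem isPrime_genericFiber [IsFractionRing R F] (hQ : ∀ g : R, C g ∈ Q → g = 0) :
    (genericFiber F Q).IsPrime :=
  have := MvPolynomial.isLocalization (σ := σ) (nonZeroDivisors R) F
  IsLocalization.isPrime_of_isPrime_disjoint _ _ Q ‹_› (disjoint_map_C_nonZeroDivisors hQ)

theorem ringKrullDim_genericFiber_add (F : Type*) [Field F] [Algebra R F] [IsFractionRing R F]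
    (k : Type*) [Field k] [Algebra k R] [Algebra.FiniteType k R] [Finite σ]
    (hQ : ∀ g : R, C g ∈ Q → g = 0) :
    ringKrullDim (MvPolynomial σ F ⧸ genericFiber F Q) + ringKrullDim R =
      ringKrullDim (MvPolynomial σ R ⧸ Q) := by
  have := MvPolynomial.isLocalization (σ := σ) (nonZeroDivisors R) F
  have := isPrime_genericFiber F hQ
  rw [genericFiber_eq_map_algebraMap] at this ⊢
  algebraize [(algebraMap R F).comp (algebraMap k R)]
  have := IsLocalization.isAlgebraic F (nonZeroDivisors R)
  have := faithfulSMul_quotient_map_of_isLocalization (MvPolynomial σ F)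
    (disjoint_map_C_nonZeroDivisors hQ)
  have := isAlgebraic_quotient_map_of_isLocalization (MvPolynomial σ F)
    ((nonZeroDivisors R).map (C (σ := σ))) (Q := Q)
  have := IsScalarTower.of_algebraMap_eq (R := k) (S := MvPolynomial σ R ⧸ Q)
    (A := MvPolynomial σ F ⧸ Q.map (algebraMap (MvPolynomial σ R) (MvPolynomial σ F)))
    fun c ↦ congrArg (Ideal.Quotient.mk _) (map_C (algebraMap R F) _).symm
  exact ringKrullDim_add_eq_of_isAlgebraic k R _ F _

end GenericFiber

section Independence

variable {A : Type*} [CommRing A] {N : Type*}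

theorem algebraicIndependent_X_of_injective {S : Type*} [CommRing S]
    [Algebra S (MvPolynomial N A)]
    (hS : Function.Injective (constantCoeff.comp (algebraMap S (MvPolynomial N A)))) :
    AlgebraicIndependent S (X : N → MvPolynomial N A) := by
  classical
  rw [algebraicIndependent_iff]
  intro g hg
  by_contra hg0
  -- The scalars from `S` need not be constants of `A[N]`, but at a minimal exponent `m` of `g` only
  -- their constant terms contribute.
  obtain ⟨m, hm⟩ := g.support.exists_minimal (support_nonempty.mpr hg0)
  have hcoeff : coeff m (aeval X g : MvPolynomial N A) =
      constantCoeff (algebraMap S (MvPolynomial N A) (coeff m g)) := by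
    have hmonomial (b : N →₀ ℕ) :
        ∏ n ∈ b.support, (X n : MvPolynomial N A) ^ b n = monomial b 1 := by
      rw [monomial_eq, C_1, one_mul, Finsupp.prod]
    rw [aeval_eq_eval₂Hom, coe_eval₂Hom, eval₂_eq, coeff_sum, Finset.sum_eq_single m]
    · rw [hmonomial, coeff_mul_monomial', if_pos le_rfl, tsub_self, mul_one, constantCoeff_eq]
    · intro b hb hbm
      rw [hmonomial, coeff_mul_monomial', if_neg fun hle ↦ hbm (hm.eq_of_le hb hle)]
    · exact fun h ↦ absurd hm.1 h
  rw [hg, coeff_zero] at hcoeff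
  exact mem_support_iff.mp hm.1 (hS (by simpa using hcoeff.symm))

theorem algebraicIndependent_sumElim_X {k ι : Type*} [CommRing k] [Algebra k A]
    {c : ι → MvPolynomial N A} (hc : AlgebraicIndependent k fun i ↦ constantCoeff (c i)) :
    AlgebraicIndependent k (Sum.elim X c) := by
  let ε : MvPolynomial N A →ₐ[k] A :=
    { constantCoeff with commutes' := fun a ↦ constantCoeff_C N (algebraMap k A a) }
  replace hc : AlgebraicIndependent k (ε ∘ c) := hc
  refine hc.of_comp.sumElim (algebraicIndependent_X_of_injective ?_)
  rw [injective_iff_map_eq_zero]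
  rintro ⟨f, hf⟩ (hf0 : ε f = 0)
  rw [Algebra.adjoin_range_eq_range_aeval] at hf
  obtain ⟨q, rfl⟩ := hf
  have hq : q = 0 := hc.eq_zero_of_aeval_eq_zero q ((comp_aeval_apply c ε q).symm.trans hf0)
  exact Subtype.ext (by simp [hq])

end Independence

theorem ker_eq_of_forall_X_sub_mem {A B Λ : Type*} [CommRing A] [CommRing B] [Algebra A B]
    {f : MvPolynomial Λ A →ₐ[A] B} (g : B →ₐ[A] MvPolynomial Λ A) {I : Ideal (MvPolynomial Λ A)}
    (hI : I ≤ RingHom.ker f) (hX : ∀ l, X l - g (f (X l)) ∈ I) : RingHom.ker f = I := by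
  have hmk : Ideal.Quotient.mkₐ A I = (Ideal.Quotient.mkₐ A I).comp (g.comp f) :=
    algHom_ext fun l ↦ Ideal.Quotient.eq.mpr (hX l)
  refine le_antisymm (fun q hq ↦ ?_) hI
  rw [← Ideal.Quotient.eq_zero_iff_mem, ← Ideal.Quotient.mkₐ_eq_mk A, hmk, AlgHom.comp_apply,
    AlgHom.comp_apply, (RingHom.mem_ker).mp hq, map_zero, map_zero]

section Elimination

variable {R N κ Λ : Type*} [CommRing R] (p : Ideal R) (e : N ⊕ κ ≃ Λ) (h : κ → MvPolynomial N R)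

/-- The substitution `R[Λ] → R[N]` eliminating the variables indexed by `κ`: the `i`-th of them is
replaced by `h i`. -/
def elimination : MvPolynomial Λ R →ₐ[R] MvPolynomial N R :=
  aeval fun l ↦ Sum.elim X h (e.symm l)

/-- The equation `Λ_i = h_i` expressing an eliminated variable through the others. -/
def graphEquation (i : κ) : MvPolynomial Λ R :=
  X (e (Sum.inr i)) - rename (e ∘ Sum.inl) (h i)

/-- The ideal of `R[Λ]` cutting out, over `V(p)`, the graph of `h`. -/
def graphIdeal : Ideal (MvPolynomial Λ R) :=
  p.map C ⊔ Ideal.span (Set.range (graphEquation e h))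

theorem elimination_rename (f : MvPolynomial N R) :
    elimination e h (rename (e ∘ Sum.inl) f) = f := by
  rw [elimination, aeval_rename]
  simp [Function.comp_def]

theorem ker_elimination :
    RingHom.ker (elimination e h) = Ideal.span (Set.range (graphEquation e h)) := by
  refine ker_eq_of_forall_X_sub_mem (rename (e ∘ Sum.inl)) ?_ fun l ↦ ?_
  · rw [Ideal.span_le]
    rintro _ ⟨i, rfl⟩
    rw [SetLike.mem_coe, RingHom.mem_ker, graphEquation, map_sub, elimination_rename]
    simp [elimination]
  · obtain ⟨n | i, rfl⟩ := e.surjective l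
    · simp [elimination]
    · exact Ideal.subset_span ⟨i, by simp [graphEquation, elimination]⟩

/-- The surjection `R[Λ] → (R ⧸ p)[N]` with kernel `graphIdeal p e h`. -/
def reducedElimination : MvPolynomial Λ R →ₐ[R] MvPolynomial N (R ⧸ p) :=
  (mapAlgHom (Ideal.Quotient.mkₐ R p)).comp (elimination e h)

theorem reducedElimination_surjective : Function.Surjective (reducedElimination p e h) :=
  (map_surjective _ Ideal.Quotient.mk_surjective).comp fun f ↦ ⟨_, elimination_rename e h f⟩

theorem ker_reducedElimination :
    RingHom.ker (reducedElimination p e h) = graphIdeal p e h := by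
  have hmap : p.map C = (p.map (C (σ := Λ))).map (elimination e h) := by
    refine Eq.trans ?_ (Ideal.map_map C (elimination e h).toRingHom).symm
    exact congrArg p.map (elimination e h).comp_algebraMap.symm
  have hker : RingHom.ker (mapAlgHom (σ := N) (Ideal.Quotient.mkₐ R p)) = p.map C :=
    (ker_map (Ideal.Quotient.mk p)).trans (by rw [Ideal.mk_ker])
  rw [reducedElimination, ← AlgHom.comap_ker, hker, hmap,
    Ideal.comap_map_of_surjective' _ fun f ↦ ⟨_, elimination_rename e h f⟩, ker_elimination,
    graphIdeal]

theorem isPrime_graphIdeal [p.IsPrime] : (graphIdeal p e h).IsPrime := by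
  rw [← ker_reducedElimination]
  exact RingHom.ker_isPrime _

theorem ringKrullDim_quotient_graphIdeal [IsNoetherianRing R] [Finite N] :
    ringKrullDim (MvPolynomial Λ R ⧸ graphIdeal p e h) = ringKrullDim (R ⧸ p) + Nat.card N := by
  rw [← ker_reducedElimination, ← ringKrullDim_of_isNoetherianRing]
  exact RingEquiv.ringKrullDim <| RingHom.quotientKerEquivOfSurjective
    (f := (reducedElimination p e h).toRingHom) (reducedElimination_surjective p e h)

variable {p e h}

theorem eq_zero_of_map_mem_graphIdeal {k : Type*} [CommRing k] [Algebra k R]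
    (hh : AlgebraicIndependent k fun i ↦ Ideal.Quotient.mk p (constantCoeff (h i)))
    {g : MvPolynomial Λ k} (hg : map (algebraMap k R) g ∈ graphIdeal p e h) : g = 0 := by
  let c : κ → MvPolynomial N (R ⧸ p) := fun i ↦ mapAlgHom (Ideal.Quotient.mkₐ R p) (h i)
  have hind : AlgebraicIndependent k (Sum.elim X c) :=
    algebraicIndependent_sumElim_X (by simpa [c] using hh)
  have hrestrict : aeval (Sum.elim X c ∘ e.symm) =
      ((reducedElimination p e h).restrictScalars k).comp (mapAlgHom (Algebra.ofId k R)) := by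
    refine algHom_ext fun l ↦ ?_
    obtain ⟨n | i, rfl⟩ := e.surjective l <;> simp [c, reducedElimination, elimination]
  refine (hind.comp _ e.symm.injective).eq_zero_of_aeval_eq_zero g ?_
  rw [← ker_reducedElimination] at hg
  exact (AlgHom.congr_fun hrestrict g).trans hg

end Elimination

section GenericEquations

variable {K σ κ : Type*} [CommRing K] {M : κ → Type*}

section Parameters

variable (z : ∀ i, M i)

/-- All parameters, as the disjoint union of those other than `⟨i, z i⟩` and of the `⟨i, z i⟩`. -/
def parameterEquiv : (Σ i, {m : M i // m ≠ z i}) ⊕ κ ≃ Σ i, M i :=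
  .ofBijective (Sum.elim (fun n ↦ ⟨n.1, n.2.1⟩) fun i ↦ ⟨i, z i⟩) <| by
    classical
    refine ⟨Function.Injective.sumElim ?_ ?_ ?_, fun ⟨i, m⟩ ↦ ?_⟩
    · exact Function.injective_id.sigma_map fun _ ↦ Subtype.val_injective
    · exact fun i j hij ↦ congrArg Sigma.fst hij
    · rintro ⟨i, m, hm⟩ j hij
      obtain rfl : i = j := congrArg Sigma.fst hij
      exact hm (eq_of_heq (Sigma.mk.inj hij).2)
    · by_cases hm : m = z i
      · exact ⟨Sum.inr i, by simp [hm]⟩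
      · exact ⟨Sum.inl ⟨i, m, hm⟩, rfl⟩

theorem parameterEquiv_inl (n : Σ i, {m : M i // m ≠ z i}) :
    parameterEquiv z (Sum.inl n) = ⟨n.1, n.2.1⟩ := rfl

theorem parameterEquiv_inr (i : κ) : parameterEquiv z (Sum.inr i) = ⟨i, z i⟩ := rfl

end Parameters

variable [∀ i, Fintype (M i)] (p : Ideal (MvPolynomial σ K)) (y : ∀ i, M i → MvPolynomial σ K)
  (t : κ → MvPolynomial σ K)

/-- The equation `Q_i = ∑ m, Λ_{i,m} y_{i,m} - t_i` with indeterminate coefficients `Λ_{i,m}`: the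
case `y_{i,m}` the monomials of degree at most `D_i` and `t_i = T_i` is that of the generic
polynomials. -/
def genericEquation (i : κ) : MvPolynomial σ (MvPolynomial (Σ i, M i) K) :=
  ∑ m, C (X ⟨i, m⟩) * map C (y i m) - map C (t i)

/-- The ideal `⟨p, Q_1,…,Q_ρ⟩` of `K[Λ][σ]`, for `Q_i` the generic equations. -/
def genericIdeal : Ideal (MvPolynomial σ (MvPolynomial (Σ i, M i) K)) :=
  p.map (map C) ⊔ Ideal.span (Set.range (genericEquation y t))

variable (z : ∀ i, M i)

open Classical in
/-- The solution of the `i`-th generic equation for the parameter `⟨i, z i⟩`, when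
`y i (z i) = 1`. -/
def solvedParameter (i : κ) : MvPolynomial (Σ i, {m : M i // m ≠ z i}) (MvPolynomial σ K) :=
  C (t i) - ∑ m : {m : M i // m ≠ z i}, X ⟨i, m⟩ * C (y i m)

theorem constantCoeff_solvedParameter (i : κ) : constantCoeff (solvedParameter y t z i) = t i := by
  simp [solvedParameter]

theorem commAlgEquiv_map_C (Λ : Type*) (f : MvPolynomial σ K) :
    commAlgEquiv K σ Λ (map C f) = C f := by
  have hC : commAlgEquiv K Λ σ (C f) = map C f := commAlgEquiv_C ..
  rw [← hC]
  exact (commAlgEquiv K Λ σ).symm_apply_apply _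

variable {y z} (hz : ∀ i, y i (z i) = 1)

include hz in
theorem commAlgEquiv_genericEquation (i : κ) :
    commAlgEquiv K σ (Σ i, M i) (genericEquation y t i) =
      graphEquation (parameterEquiv z) (solvedParameter y t z) i := by
  classical
  simp only [genericEquation, graphEquation, solvedParameter, map_sub, map_sum, map_mul,
    commAlgEquiv_map_C, commAlgEquiv_C, rename_X, rename_C, map_X, Function.comp_apply,
    parameterEquiv_inl, parameterEquiv_inr]
  rw [Fintype.sum_eq_add_sum_subtype_ne _ (z i), hz, C_1, mul_one, sub_sub_eq_add_sub]

include hz in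
theorem map_commAlgEquiv_genericIdeal :
    (genericIdeal p y t).map (commAlgEquiv K σ (Σ i, M i)).toRingEquiv =
      graphIdeal p (parameterEquiv z) (solvedParameter y t z) := by
  let φ : MvPolynomial σ (MvPolynomial (Σ i, M i) K) →+*
      MvPolynomial (Σ i, M i) (MvPolynomial σ K) := (commAlgEquiv K σ (Σ i, M i)).toRingEquiv
  have hp : (p.map (map C)).map φ = p.map C := by
    rw [Ideal.map_map]
    exact congrArg (Ideal.map · p) (RingHom.ext (commAlgEquiv_map_C _))
  have hspan : (Ideal.span (Set.range (genericEquation y t))).map φ =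
      Ideal.span (Set.range (graphEquation (parameterEquiv z) (solvedParameter y t z))) := by
    rw [Ideal.map_span, ← Set.range_comp]
    exact congrArg (Ideal.span <| Set.range ·) (funext (commAlgEquiv_genericEquation t hz))
  exact (Ideal.map_sup φ _ _).trans (congrArg₂ (· ⊔ ·) hp hspan)

include hz in
theorem genericIdeal_eq_comap_graphIdeal :
    genericIdeal p y t = (graphIdeal p (parameterEquiv z) (solvedParameter y t z)).comap
      (commAlgEquiv K σ (Σ i, M i)).toRingEquiv := by
  rw [← map_commAlgEquiv_genericIdeal p t hz]
  exact (Ideal.comap_map_of_bijective _ (commAlgEquiv K σ (Σ i, M i)).bijective).symm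

include hz in
theorem isPrime_genericIdeal [p.IsPrime] : (genericIdeal p y t).IsPrime := by
  rw [genericIdeal_eq_comap_graphIdeal p t hz]
  have := isPrime_graphIdeal p (parameterEquiv z) (solvedParameter y t z)
  exact Ideal.comap_isPrime _ _

include hz in
theorem ringKrullDim_quotient_genericIdeal_add [IsNoetherianRing K] [Finite σ] [Finite κ] :
    ringKrullDim (MvPolynomial σ (MvPolynomial (Σ i, M i) K) ⧸ genericIdeal p y t) + Nat.card κ =
      ringKrullDim (MvPolynomial σ K ⧸ p) + Nat.card (Σ i, M i) := by
  rw [(Ideal.quotientEquiv _ _ _ (map_commAlgEquiv_genericIdeal p t hz).symm).ringKrullDim,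
    ringKrullDim_quotient_graphIdeal, add_assoc, ← Nat.cast_add, ← Nat.card_sum,
    Nat.card_congr (parameterEquiv z)]

include hz in
theorem eq_zero_of_C_mem_genericIdeal
    (ht : AlgebraicIndependent K fun i ↦ Ideal.Quotient.mk p (t i))
    {g : MvPolynomial (Σ i, M i) K} (hg : C g ∈ genericIdeal p y t) : g = 0 := by
  rw [genericIdeal_eq_comap_graphIdeal p t hz, Ideal.mem_comap] at hg
  have hC : commAlgEquiv K σ (Σ i, M i) (C g) = map C g := commAlgEquiv_C ..
  refine eq_zero_of_map_mem_graphIdeal ?_ (hC ▸ hg)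
  simpa only [constantCoeff_solvedParameter] using ht

end GenericEquations

theorem ringKrullDim_genericFiber_genericIdeal_add {K σ κ : Type*} [Field K] [Finite σ] [Finite κ]
    {M : κ → Type*} [∀ i, Fintype (M i)] (F : Type*) [Field F]
    [Algebra (MvPolynomial (Σ i, M i) K) F] [IsFractionRing (MvPolynomial (Σ i, M i) K) F]
    (p : Ideal (MvPolynomial σ K)) [p.IsPrime] {y : ∀ i, M i → MvPolynomial σ K}
    (t : κ → MvPolynomial σ K) {z : ∀ i, M i} (hz : ∀ i, y i (z i) = 1)
    (ht : AlgebraicIndependent K fun i ↦ Ideal.Quotient.mk p (t i)) :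
    ringKrullDim (MvPolynomial σ F ⧸ genericFiber F (genericIdeal p y t)) + Nat.card κ =
      ringKrullDim (MvPolynomial σ K ⧸ p) := by
  have := isPrime_genericIdeal p t hz
  have hfiber := ringKrullDim_genericFiber_add F K
    fun g ↦ eq_zero_of_C_mem_genericIdeal p t hz ht (g := g)
  rw [ringKrullDim_of_isNoetherianRing, ringKrullDim_eq_zero_of_field, zero_add] at hfiber
  rw [← ENat.WithBot.add_natCast_cancel (c := Nat.card (Σ i, M i)),
    ← ringKrullDim_quotient_genericIdeal_add p t hz, ← hfiber, add_right_comm]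

section SplitVariables

variable {K τ υ : Type*} [CommRing K]

variable (K τ υ) in
/-- The identification of `K[T,Y]` with `K[T][Y]`. -/
def collectEquiv : MvPolynomial (τ ⊕ υ) K ≃ₐ[K] MvPolynomial υ (MvPolynomial τ K) :=
  (renameEquiv K (Equiv.sumComm τ υ)).trans (sumAlgEquiv K υ τ)

theorem collectEquiv_rename_inl (g : MvPolynomial τ K) :
    collectEquiv K τ υ (rename Sum.inl g) = C g := by
  simpa [collectEquiv, rename_rename, Function.comp_def] using
    AlgHom.congr_fun (sumAlgEquiv_comp_rename_inr K υ τ) g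

variable (L : Type*) [CommRing L] [Algebra (MvPolynomial τ K) L]

/-- The canonical homomorphism `K[T,Y] → L[Y]`, for `L` an algebra over `K[T]` such as `K(T)`. -/
def extendCoefficients : MvPolynomial (τ ⊕ υ) K →+* MvPolynomial υ L :=
  (map (algebraMap (MvPolynomial τ K) L)).comp (collectEquiv K τ υ).toRingEquiv

theorem ringKrullDim_quotient_map_extendCoefficients_add {K : Type*} [Field K] (L : Type*) [Field L]
    [Algebra (MvPolynomial τ K) L] [IsFractionRing (MvPolynomial τ K) L] [Finite τ] [Finite υ]
    (p : Ideal (MvPolynomial (τ ⊕ υ) K)) [p.IsPrime]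
    (hp : ∀ g : MvPolynomial τ K, rename Sum.inl g ∈ p → g = 0) :
    ringKrullDim (MvPolynomial υ L ⧸ p.map (extendCoefficients L)) + Nat.card τ =
      ringKrullDim (MvPolynomial (τ ⊕ υ) K ⧸ p) := by
  let φ : MvPolynomial (τ ⊕ υ) K ≃+* MvPolynomial υ (MvPolynomial τ K) :=
    (collectEquiv K τ υ).toRingEquiv
  have : (p.map φ).IsPrime := Ideal.map_isPrime_of_equiv φ
  have hC : ∀ g : MvPolynomial τ K, C g ∈ p.map φ → g = 0 := fun g hg ↦ by
    obtain ⟨f, hf, hfg⟩ := (Ideal.mem_map_of_equiv φ _).mp hg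
    obtain rfl : f = rename Sum.inl g := φ.injective (hfg.trans (collectEquiv_rename_inl g).symm)
    exact hp g hf
  have hmap : genericFiber L (p.map φ) = p.map (extendCoefficients L) := Ideal.map_map φ.toRingHom _
  have hquotient : ringKrullDim (MvPolynomial (τ ⊕ υ) K ⧸ p) =
      ringKrullDim (MvPolynomial υ (MvPolynomial τ K) ⧸ p.map φ) :=
    (Ideal.quotientEquiv p _ φ rfl).ringKrullDim
  rw [← hmap, hquotient, ← ringKrullDim_genericFiber_add L K hC,
    ringKrullDim_of_isNoetherianRing, ringKrullDim_eq_zero_of_field, zero_add]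

end SplitVariables

theorem algebraicIndependent_mk_X_inl {K τ υ κ : Type*} [CommRing K] {a : κ → τ}
    (ha : a.Injective) {p : Ideal (MvPolynomial (τ ⊕ υ) K)}
    (hp : ∀ g : MvPolynomial τ K, rename Sum.inl g ∈ p → g = 0) :
    AlgebraicIndependent K fun i ↦ Ideal.Quotient.mk p (X (Sum.inl (a i))) := by
  suffices AlgebraicIndependent K fun i : τ ↦ Ideal.Quotient.mkₐ K p (X (Sum.inl i)) from
    this.comp a ha
  have h : aeval (fun i : τ ↦ Ideal.Quotient.mkₐ K p (X (Sum.inl i))) =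
      (Ideal.Quotient.mkₐ K p).comp (rename Sum.inl) :=
    algHom_ext fun i ↦ by simp
  rw [algebraicIndependent_iff, h]
  exact fun g hg ↦ hp g <| Ideal.Quotient.eq_zero_iff_mem.mp hg

theorem stmt_12_general {K τ υ κ : Type*} [Field K] [Finite τ] [Finite υ] [Finite κ]
    {M : κ → Type*} [∀ i, Fintype (M i)] (L F : Type*) [Field L] [Field F]
    [Algebra (MvPolynomial τ K) L] [IsFractionRing (MvPolynomial τ K) L]
    [Algebra (MvPolynomial (Σ i, M i) K) F] [IsFractionRing (MvPolynomial (Σ i, M i) K) F]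
    (p : Ideal (MvPolynomial (τ ⊕ υ) K)) [p.IsPrime]
    (hp : ∀ g : MvPolynomial τ K, rename Sum.inl g ∈ p → g = 0)
    {y : ∀ i, M i → MvPolynomial (τ ⊕ υ) K} {t : κ → MvPolynomial (τ ⊕ υ) K}
    (hy : ∀ i, ∃ m, y i m = 1) (ht : AlgebraicIndependent K fun i ↦ Ideal.Quotient.mk p (t i)) :
    (genericIdeal p y t).IsPrime ∧
    (∀ g : MvPolynomial (Σ i, M i) K, C g ∈ genericIdeal p y t → g = 0) ∧
    (genericFiber F (genericIdeal p y t)).IsPrime ∧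
    ringKrullDim (MvPolynomial (τ ⊕ υ) F ⧸ genericFiber F (genericIdeal p y t)) + Nat.card κ =
      ringKrullDim (MvPolynomial υ L ⧸ p.map (extendCoefficients L)) + Nat.card τ := by
  choose z hz using hy
  have hprime := isPrime_genericIdeal p t hz
  have hcap := fun g ↦ eq_zero_of_C_mem_genericIdeal p t hz ht (g := g)
  refine ⟨hprime, hcap, isPrime_genericFiber F hcap, ?_⟩
  rw [ringKrullDim_genericFiber_genericIdeal_add F p t hz ht,
    ringKrullDim_quotient_map_extendCoefficients_add L p hp]

theorem eq_natCast_sub_of_add_eq {x : WithBot ℕ∞} {a b : ℕ} (h : x + b = a) (hba : b ≤ a) :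
    x = (a - b : ℕ) := by
  rwa [← ENat.WithBot.add_natCast_cancel (c := b), ← Nat.cast_add, Nat.sub_add_cancel hba]

section GenericPolynomials

variable (K : Type) [Field K] (r s : ℕ)

theorem extHom_eq_extendCoefficients :
    extHom K r s = extendCoefficients (RatFuncField K (Fin r)) := by
  refine MvPolynomial.ringHom_ext (fun a ↦ ?_) ?_
  · simp [extHom, extendCoefficients, collectEquiv]
  · rintro (i | j) <;> simp [extHom, extendCoefficients, collectEquiv]

variable {ρ : ℕ} (hρr : ρ ≤ r) (D : Fin ρ → ℕ)

theorem PIdeal_eq_genericIdeal (p : Ideal (MvPolynomial (Fin r ⊕ Fin s) K)) :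
    PIdeal K r s ρ hρr D p = genericIdeal (M := fun i ↦ MonLE s (D i)) p
      (fun _ m ↦ monomial (Finsupp.mapDomain Sum.inr m.1) 1)
      (fun i ↦ X (Sum.inl (Fin.castLE hρr i))) := by
  have h (i : Fin ρ) : quasiGenT K r s ρ hρr D i = genericEquation (M := fun i ↦ MonLE s (D i))
      (fun _ m ↦ monomial (Finsupp.mapDomain Sum.inr m.1) 1)
      (fun i ↦ X (Sum.inl (Fin.castLE hρr i))) i := by
    simp only [quasiGenT, genericEquation, map_monomial, map_one, C_mul_monomial, mul_one, map_X]
    rfl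
  rw [PIdeal, genericIdeal, funext h]
  rfl

variable {K r s}

theorem exists_monomial_mapDomain_eq_one (i : Fin ρ) : ∃ m : MonLE s (D i),
    (monomial (m.1.mapDomain Sum.inr) 1 : MvPolynomial (Fin r ⊕ Fin s) K) = 1 :=
  ⟨⟨0, by simp⟩, congrArg (monomial · 1) Finsupp.mapDomain_zero⟩

end GenericPolynomials

/-- `p ⊆ K[T,Y]` prime with `p ∩ K[T] = 0` and `dim K(T)[Y]/p̃ = d > 0`;
for `0 < ρ ≤ r` and quasi-generic polynomials `Q_i = U_{D_i}(Λ_i,Y) − T_i`, the ideal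
`P = ⟨p, Q_1,…,Q_ρ⟩ ⊆ K[ΛΛ,T,Y]` is prime, `P ∩ K[ΛΛ] = 0`, and the extension of `P` to
`K(ΛΛ)[T,Y]` is prime with quotient of Krull dimension `d + r − ρ`. -/
theorem stmt_12 (K : Type) [Field K] (r s : ℕ)
    (p : Ideal (MvPolynomial (Fin r ⊕ Fin s) K)) (hp : p.IsPrime)
    (hcap : ∀ g : MvPolynomial (Fin r) K, MvPolynomial.rename Sum.inl g ∈ p → g = 0)
    (d : ℕ) (hd0 : 0 < d)
    (hd : ringKrullDim (MvPolynomial (Fin s) (RatFuncField K (Fin r)) ⧸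
        Ideal.map (extHom K r s) p) = (d : WithBot ℕ∞))
    (ρ : ℕ) (hρ0 : 0 < ρ) (hρr : ρ ≤ r) (D : Fin ρ → ℕ) :
    (PIdeal K r s ρ hρr D p).IsPrime ∧
    (∀ g : MvPolynomial (LamIdx s ρ D) K,
      MvPolynomial.C g ∈ PIdeal K r s ρ hρr D p → g = 0) ∧
    (Ideal.map
      (MvPolynomial.map
        (algebraMap (MvPolynomial (LamIdx s ρ D) K) (RatFuncField K (LamIdx s ρ D))))
      (PIdeal K r s ρ hρr D p)).IsPrime ∧
    ringKrullDim (MvPolynomial (Fin r ⊕ Fin s) (RatFuncField K (LamIdx s ρ D)) ⧸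
      Ideal.map
        (MvPolynomial.map
          (algebraMap (MvPolynomial (LamIdx s ρ D) K) (RatFuncField K (LamIdx s ρ D))))
        (PIdeal K r s ρ hρr D p)) = ((d + r - ρ : ℕ) : WithBot ℕ∞) := by
  rw [PIdeal_eq_genericIdeal]
  rw [extHom_eq_extendCoefficients] at hd
  obtain ⟨hprime, hgeneric, hfiber, hdim⟩ := stmt_12_general (RatFuncField K (Fin r))
    (RatFuncField K (Σ i, MonLE s (D i))) p hcap (exists_monomial_mapDomain_eq_one D)
    (algebraicIndependent_mk_X_inl (Fin.castLE_injective hρr) hcap)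
  rw [Nat.card_fin, Nat.card_fin, hd, ← Nat.cast_add] at hdim
  exact ⟨hprime, hgeneric, hfiber, eq_natCast_sub_of_add_eq hdim (le_add_left hρr)⟩

end
end

section
/- Let K be a field, Y = (Y_1,…,Y_s) a tuple of variables, ρ an integer with 0 < ρ ≤ s, and D_1,…,D_ρ ≥ 1 integers. Let Q_{D_1}(Λ_1,Y),…,Q_{D_ρ}(Λ_ρ,Y) be the generic polynomials of degrees D_1,…,D_ρ in pairwise disjoint parameter tuples Λ_1,…,Λ_ρ, and write ΛΛ = (Λ_1,…,Λ_ρ). Then the ideal ⟨Q_{D_1},…,Q_{D_ρ}⟩ of K[ΛΛ,Y] is a prime ideal of height ρ. -/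
open MvPolynomial

noncomputable section

/-!
Give `Y` to the coefficients: over `K[Y]` the generic polynomials are linear forms in disjoint sets
of parameters, and the parameter of the constant monomial enters the `i`-th one with coefficient
`1`. So any subfamily can be solved for the constant-term parameters: the ideal it generates is the
kernel of the substitution of the solution, hence prime, and this substitution fixes the remaining
members. The initial subfamilies therefore generate a strict chain of primes, which bounds the
height from below; Krull's height theorem bounds it from above.
-/

lemma idealHeight_eq_height {R : Type} [CommRing R] (I : Ideal R) : idealHeight I = I.height := by
  apply le_antisymm
  · rw [I.height_eq_inf_minimalPrimes]
    refine le_iInf₂ fun p hp => iInf_le_of_le ⟨⟨p, hp.isPrime⟩, hp.le⟩ ?_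
    exact (PrimeSpectrum.height_eq_orderHeight ⟨p, hp.isPrime⟩).ge
  · refine le_iInf fun p => ?_
    rw [← PrimeSpectrum.height_eq_orderHeight]
    exact Ideal.height_mono p.2

section PrimeSubfamilies

variable {R ι : Type*} [CommRing R] {f : ι → R}

lemma card_le_height_span_image (hprime : ∀ J : Set ι, (Ideal.span (f '' J)).IsPrime)
    (hnotMem : ∀ (J : Set ι) (i : ι), i ∉ J → f i ∉ Ideal.span (f '' J)) (t : Finset ι) :
    (t.card : ℕ∞) ≤ (Ideal.span (f '' t)).height := by
  induction t using Finset.cons_induction with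
  | empty => simp
  | cons i t hi ih =>
    have hlt : Ideal.span (f '' t) < Ideal.span (f '' (Finset.cons i t hi : Finset ι)) := by
      refine lt_of_le_of_ne (Ideal.span_mono (Set.image_mono (by simp))) fun heq => ?_
      refine hnotMem t i (by simpa using hi) ?_
      rw [heq]
      exact Ideal.subset_span ⟨i, by simp, rfl⟩
    have := hprime t
    have := hprime (Finset.cons i t hi : Finset ι)
    calc ((Finset.cons i t hi).card : ℕ∞) = t.card + 1 := by simp
      _ ≤ (Ideal.span (f '' t)).height + 1 := by gcongr
      _ ≤ _ := Ideal.height_add_one_le_of_lt_of_isPrime hlt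

lemma height_span_range_eq_card [IsNoetherianRing R] [Fintype ι]
    (hprime : ∀ J : Set ι, (Ideal.span (f '' J)).IsPrime)
    (hnotMem : ∀ (J : Set ι) (i : ι), i ∉ J → f i ∉ Ideal.span (f '' J)) :
    (Ideal.span (Set.range f)).height = Fintype.card ι := by
  classical
  apply le_antisymm
  · have : (Ideal.span (Set.range f)).IsPrime := Set.image_univ (f := f) ▸ hprime Set.univ
    calc (Ideal.span (Set.range f)).height
        ≤ (Finset.univ.image f).card := by
          apply Ideal.height_le_card_of_mem_minimalPrimes_span_finset
          simp [Ideal.minimalPrimes_eq_subsingleton_self]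
      _ ≤ Fintype.card ι := by exact_mod_cast Finset.card_image_le
  · simpa using card_le_height_span_image hprime hnotMem Finset.univ

end PrimeSubfamilies

section SolvedSystems

variable {R σ ι : Type*} [CommRing R] {f : ι → MvPolynomial σ R} {c : ι → σ}

/-- The system of equations `f i = 0` is solved for the variables `X (c i)`: the `c i` are distinct
and each `f i` is the sum of `X (c i)` and of a polynomial in the variables outside `range c`. -/
structure IsSolvedFor (f : ι → MvPolynomial σ R) (c : ι → σ) : Prop where
  injective : Function.Injective c
  sub_X_mem : ∀ i, f i - X (c i) ∈ supported R (Set.range c)ᶜ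

/-- The substitution `X (c i) ↦ X (c i) - f i` for `i ∈ J`. For a system solved for the `X (c i)`,
it replaces these variables by their expressions in terms of the variables outside `range c`. -/
def solutionHom (f : ι → MvPolynomial σ R) (c : ι → σ) (J : Set ι) :
    MvPolynomial σ R →ₐ[R] MvPolynomial σ R :=
  aeval fun l => X l - Function.extend c (J.indicator f) 0 l

lemma solutionHom_eq_self_of_mem_supported (J : Set ι) {p : MvPolynomial σ R}
    (hp : p ∈ supported R (Set.range c)ᶜ) : solutionHom f c J p = p := by
  have heq : Set.EqOn (solutionHom f c J) (AlgHom.id R _) (supported R (Set.range c)ᶜ) := by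
    rw [supported_eq_adjoin_X, AlgHom.eqOn_adjoin_iff]
    rintro _ ⟨l, hl, rfl⟩
    simp [solutionHom, Function.extend_apply' _ _ _ hl]
  exact heq hp

namespace IsSolvedFor

lemma solutionHom_X (h : IsSolvedFor f c) (J : Set ι) (i : ι) :
    solutionHom f c J (X (c i)) = X (c i) - J.indicator f i := by
  simp [solutionHom, h.injective.extend_apply]

lemma solutionHom_apply (h : IsSolvedFor f c) (J : Set ι) (i : ι) :
    solutionHom f c J (f i) = f i - J.indicator f i := by
  have hrest := solutionHom_eq_self_of_mem_supported (f := f) J (h.sub_X_mem i)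
  rw [map_sub, h.solutionHom_X] at hrest
  linear_combination hrest

lemma sub_solutionHom_mem_span (h : IsSolvedFor f c) (J : Set ι) (p : MvPolynomial σ R) :
    p - solutionHom f c J p ∈ Ideal.span (f '' J) := by
  let π := Ideal.Quotient.mkₐ R (Ideal.span (f '' J))
  suffices hπ : π.comp (solutionHom f c J) = π from
    Ideal.Quotient.eq.mp (AlgHom.congr_fun hπ p).symm
  ext l
  have hmem : Function.extend c (J.indicator f) 0 l ∈ Ideal.span (f '' J) := by
    by_cases hl : ∃ i, c i = l
    · obtain ⟨i, rfl⟩ := hl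
      rw [h.injective.extend_apply]
      by_cases hi : i ∈ J
      · simpa [hi] using Ideal.subset_span (Set.mem_image_of_mem f hi)
      · simp [hi]
    · simp [Function.extend_apply' _ _ _ hl]
  simpa [solutionHom, π] using Ideal.Quotient.eq_zero_iff_mem.mpr hmem

lemma span_image_eq_ker (h : IsSolvedFor f c) (J : Set ι) :
    Ideal.span (f '' J) = RingHom.ker (solutionHom f c J) := by
  apply le_antisymm
  · rw [Ideal.span_le]
    rintro _ ⟨i, hi, rfl⟩
    simp [RingHom.mem_ker, h.solutionHom_apply, hi]
  · intro p hp
    simpa [RingHom.mem_ker.mp hp] using h.sub_solutionHom_mem_span J p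

lemma isPrime_span_image [IsDomain R] (h : IsSolvedFor f c) (J : Set ι) :
    (Ideal.span (f '' J)).IsPrime :=
  h.span_image_eq_ker J ▸ RingHom.ker_isPrime _

lemma apply_ne_zero [Nontrivial R] (h : IsSolvedFor f c) (i : ι) : f i ≠ 0 := by
  intro hi
  have hX : X (c i) ∈ supported R (Set.range c)ᶜ := by simpa [hi] using h.sub_X_mem i
  exact X_mem_supported.mp hX ⟨i, rfl⟩

lemma apply_notMem_span_image [Nontrivial R] (h : IsSolvedFor f c) (J : Set ι) (i : ι)
    (hi : i ∉ J) : f i ∉ Ideal.span (f '' J) := by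
  simpa [h.span_image_eq_ker, RingHom.mem_ker, h.solutionHom_apply, hi] using h.apply_ne_zero i

lemma isPrime_span_range [IsDomain R] (h : IsSolvedFor f c) :
    (Ideal.span (Set.range f)).IsPrime :=
  Set.image_univ (f := f) ▸ h.isPrime_span_image Set.univ

lemma height_span_range [IsDomain R] [IsNoetherianRing R] [Finite σ] [Fintype ι]
    (h : IsSolvedFor f c) : (Ideal.span (Set.range f)).height = Fintype.card ι :=
  height_span_range_eq_card h.isPrime_span_image h.apply_notMem_span_image

end IsSolvedFor

lemma isSolvedFor_sum_smul_X {M : ι → Type*} [∀ i, Fintype (M i)] {v : ∀ i, M i → σ}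
    (hv : Function.Injective fun x : Sigma M => v x.1 x.2) {a : ∀ i, M i → R} {m₀ : ∀ i, M i}
    (ha : ∀ i, a i (m₀ i) = 1) :
    IsSolvedFor (fun i => ∑ m, (a i m • X (v i m) : MvPolynomial σ R)) (fun i => v i (m₀ i)) where
  injective i j hij := congrArg Sigma.fst (hv (a₁ := ⟨i, m₀ i⟩) (a₂ := ⟨j, m₀ j⟩) hij)
  sub_X_mem i := by
    classical
    nontriviality R
    rw [← Finset.add_sum_erase _ _ (Finset.mem_univ (m₀ i)), ha, one_smul, add_sub_cancel_left]
    refine Subalgebra.sum_mem _ fun m hm => Subalgebra.smul_mem _ (X_mem_supported.mpr ?_) _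
    rintro ⟨j, hj⟩
    obtain ⟨rfl, hm₀⟩ := Sigma.mk.inj (hv (a₁ := ⟨j, m₀ j⟩) (a₂ := ⟨i, m⟩) hj)
    exact Finset.ne_of_mem_erase hm (eq_of_heq hm₀).symm

end SolvedSystems

section GenericPolynomials

variable (K : Type) [Field K] (s : ℕ)

lemma commAlgEquiv_genPoly (D : ℕ) {Λ : Type} (v : MonLE s D → Λ) :
    commAlgEquiv K (Fin s) Λ (genPoly K s D v) =
      ∑ m : MonLE s D, monomial m.1 (1 : K) • X (v m) := by
  rw [genPoly, map_sum]
  refine Finset.sum_congr rfl fun m _ => ?_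
  rw [← mul_one (X (v m)), ← C_mul_monomial, map_mul, commAlgEquiv_C_X]
  simp [monomial_eq, smul_eq_C_mul, mul_comm]

theorem stmt_13_general {ι Λ : Type} [Fintype ι] [Finite Λ] (D : ι → ℕ)
    (v : ∀ i, MonLE s (D i) → Λ)
    (hv : Function.Injective fun x : (i : ι) × MonLE s (D i) => v x.1 x.2) :
    (Ideal.span (Set.range fun i => genPoly K s (D i) (v i))).IsPrime ∧
    idealHeight (Ideal.span (Set.range fun i => genPoly K s (D i) (v i))) = Fintype.card ι := by
  set I := Ideal.span (Set.range fun i => genPoly K s (D i) (v i))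
  let e := (commAlgEquiv K (Fin s) Λ).toRingEquiv
  have hmap : I.map e = Ideal.span (Set.range fun i => e (genPoly K s (D i) (v i))) := by
    rw [Ideal.map_span, ← Set.range_comp, Function.comp_def]
  have hsolved : IsSolvedFor (fun i => e (genPoly K s (D i) (v i))) fun i => v i ⟨0, by simp⟩ := by
    simpa [e, commAlgEquiv_genPoly] using isSolvedFor_sum_smul_X hv
      (a := fun _ m => monomial m.1 (1 : K)) (m₀ := fun _ => ⟨0, by simp⟩) fun _ => rfl
  constructor
  · have := hsolved.isPrime_span_range
    rw [← Ideal.comap_map_of_bijective e e.bijective (I := I), hmap]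
    exact Ideal.comap_isPrime _ _
  · rw [idealHeight_eq_height, ← RingEquiv.height_map e, hmap, hsolved.height_span_range]

end GenericPolynomials

/-- For `0 < ρ ≤ s` and `D_i ≥ 1`, the ideal
`⟨Q_{D_1},…,Q_{D_ρ}⟩ ⊆ K[ΛΛ,Y]` generated by the `ρ` generic polynomials (in pairwise
disjoint parameter tuples) is prime of height `ρ`. -/
theorem stmt_13 (K : Type) [Field K] (s ρ : ℕ) (hρ0 : 0 < ρ) (hρs : ρ ≤ s)
    (D : Fin ρ → ℕ) (hD : ∀ i, 1 ≤ D i) :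
    (Ideal.span (Set.range fun i : Fin ρ =>
      genPoly K s (D i) (fun mo => (⟨i, mo⟩ : LamIdx s ρ D)))).IsPrime ∧
    idealHeight (Ideal.span (Set.range fun i : Fin ρ =>
      genPoly K s (D i) (fun mo => (⟨i, mo⟩ : LamIdx s ρ D)))) = (ρ : ℕ∞) := by
  have : Finite (LamIdx s ρ D) := inferInstanceAs (Finite ((i : Fin ρ) × MonLE s (D i)))
  simpa using stmt_13_general K s D (fun i mo => (⟨i, mo⟩ : LamIdx s ρ D)) fun _ _ h => h
end
end

section
/- Let K be a Hilbertian field of characteristic 0 and P(T,Y) ∈ K[T,Y] an irreducible polynomial in one variable T and an s-tuple of variables Y, with deg_Y P ≥ 1 (i.e. P ∉ K[T]). Fix an integer D ≥ 0. Then the set of polynomials U(Y) ∈ K[Y] of total degree ≤ D such that P(U(Y),Y) is irreducible in K[Y] is Zariski-dense in the space K[Y]_D of polynomials of total degree ≤ D, identified with K^{N_D} via coefficients. -/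
open MvPolynomial

noncomputable section

/-! The coefficients of `U` are treated as independent variables `Λ`. The constant coefficient
`Λ₀` occurs in the generic polynomial `U_Λ(Y)` only through the summand `Λ₀`, so `T ↦ U_Λ(Y)` is
the inclusion `K[T, Y] ≅ K[Λ₀, Y] ⊆ K[Λ, Y]` followed by the automorphism
`Λ₀ ↦ Λ₀ + (U_Λ(Y) - Λ₀)`. Hence `P(U_Λ(Y), Y)` is prime in `K[Λ][Y]`; it is not in `K[Λ]`, as one
sees by setting all `Λ_m` with `m ≠ 0` to zero, so it stays prime in `K(Λ)[Y]`, and the Hilbertian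
property applies to it. -/

section Localization

lemma prime_algebraMap_of_forall_not_dvd {A B : Type*} [CommRing A] [IsDomain A] [CommRing B]
    [Algebra A B] (M : Submonoid A) [IsLocalization M B] {x : A} (hx : Prime x)
    (hM : ∀ m ∈ M, ¬ x ∣ m) : Prime (algebraMap A B x) := by
  have hx0 : algebraMap A B x ≠ 0 := by
    rw [Ne, IsLocalization.map_eq_zero_iff M]
    rintro ⟨m, hm⟩
    have hm0 : (m : A) = 0 := (mul_eq_zero.1 hm).resolve_right hx.ne_zero
    exact hM m m.2 (hm0 ▸ dvd_zero x)
  have hdisj : Disjoint (M : Set A) (Ideal.span {x} : Ideal A) :=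
    Set.disjoint_left.2 fun m hm hmx => hM m hm (Ideal.mem_span_singleton.1 hmx)
  have hprime := IsLocalization.isPrime_of_isPrime_disjoint M B (Ideal.span {x})
    ((Ideal.span_singleton_prime hx.ne_zero).2 hx) hdisj
  rwa [Ideal.map_span, Set.image_singleton, Ideal.span_singleton_prime hx0] at hprime

attribute [local instance] MvPolynomial.algebraMvPolynomial in
lemma prime_map_algebraMap_of_notMem_range_C {σ R L : Type*} [CommRing R] [IsDomain R]
    [CommRing L] [Algebra R L] [IsFractionRing R L] {F : MvPolynomial σ R} (hF : Prime F)
    (hC : F ∉ Set.range C) : Prime (map (algebraMap R L) F) := by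
  refine prime_algebraMap_of_forall_not_dvd (B := MvPolynomial σ L)
    ((nonZeroDivisors R).map (C : R →+* MvPolynomial σ R)) hF ?_
  rintro _ ⟨c, hc, rfl⟩ hdvd
  obtain ⟨b, -, rfl⟩ := (dvd_C_iff_exists (nonZeroDivisors.ne_zero hc)).1 hdvd
  exact hC ⟨b, rfl⟩

end Localization

section ElementaryAutomorphism

lemma prime_rename_iff_of_injective {σ τ R : Type*} [CommRing R] {f : σ → τ}
    (hf : Function.Injective f) {p : MvPolynomial σ R} : Prime (rename f p) ↔ Prime p := by
  rw [← MulEquiv.prime_iff (renameEquiv R (Equiv.ofInjective f hf)),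
    ← prime_rename_iff (Set.range f), renameEquiv_apply, rename_rename]
  rfl

variable {σ R : Type*} [CommRing R] [DecidableEq σ]

/-- The substitution `X i ↦ X i + Q`, fixing all other variables. -/
def elementaryHom (i : σ) (Q : MvPolynomial σ R) : MvPolynomial σ R →ₐ[R] MvPolynomial σ R :=
  aeval (Function.update X i (X i + Q))

lemma elementaryHom_X_self (i : σ) (Q : MvPolynomial σ R) :
    elementaryHom i Q (X i) = X i + Q := by
  simp [elementaryHom]

lemma elementaryHom_X_of_ne {i j : σ} (h : j ≠ i) (Q : MvPolynomial σ R) :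
    elementaryHom i Q (X j) = X j := by
  simp [elementaryHom, h]

lemma elementaryHom_of_notMem_vars {i : σ} {p : MvPolynomial σ R} (hp : i ∉ p.vars)
    (Q : MvPolynomial σ R) : elementaryHom i Q p = p := by
  refine hom_congr_vars (f₁ := (elementaryHom i Q : MvPolynomial σ R →+* MvPolynomial σ R))
    (f₂ := RingHom.id _) (by ext; simp) (fun j hj _ => ?_) rfl
  exact elementaryHom_X_of_ne (ne_of_mem_of_not_mem hj hp) Q

lemma elementaryHom_comp_of_add_eq_zero {i : σ} {Q Q' : MvPolynomial σ R} (hQ' : i ∉ Q'.vars)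
    (h : Q + Q' = 0) : (elementaryHom i Q).comp (elementaryHom i Q') = AlgHom.id R _ := by
  refine algHom_ext fun j => ?_
  obtain rfl | hj := eq_or_ne j i
  · simp only [AlgHom.comp_apply, elementaryHom_X_self, map_add,
      elementaryHom_of_notMem_vars hQ', add_assoc, h, add_zero, AlgHom.id_apply]
  · simp only [AlgHom.comp_apply, elementaryHom_X_of_ne hj, AlgHom.id_apply]

/-- The elementary automorphism `X i ↦ X i + Q` of a polynomial ring, where `Q` does not involve
`X i`. -/
def elementaryEquiv (i : σ) (Q : MvPolynomial σ R) (hQ : i ∉ Q.vars) :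
    MvPolynomial σ R ≃ₐ[R] MvPolynomial σ R :=
  AlgEquiv.ofAlgHom (elementaryHom i Q) (elementaryHom i (-Q))
    (elementaryHom_comp_of_add_eq_zero (by rwa [vars_neg]) (add_neg_cancel Q))
    (elementaryHom_comp_of_add_eq_zero hQ (neg_add_cancel Q))

end ElementaryAutomorphism

section Specialization

variable {K : Type} [Field K]

lemma ratSpecializesTo_algebraMap_iff {ι : Type} {t : ι → K} {a : MvPolynomial ι K} {v : K} :
    RatSpecializesTo K t (algebraMap _ _ a) v ↔ eval t a = v := by
  constructor
  · rintro ⟨a', b, hb, hab, hv⟩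
    rw [← map_mul] at hab
    have hab' : b * a = a' := IsFractionRing.injective _ _ hab
    rw [← hab', map_mul] at hv
    exact (mul_left_cancel₀ hb hv).symm
  · rintro rfl
    exact ⟨a, 1, by simp, by simp, by simp⟩

lemma polySpecializesTo_map_algebraMap_iff {ι : Type} {s : ℕ} {t : ι → K}
    {F : MvPolynomial (Fin s) (MvPolynomial ι K)} {q : MvPolynomial (Fin s) K} :
    PolySpecializesTo K t (map (algebraMap _ _) F) q ↔ map (eval t) F = q := by
  simp only [PolySpecializesTo, coeff_map, ratSpecializesTo_algebraMap_iff, MvPolynomial.ext_iff]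

lemma IsZariskiDense.preimage_comp_equiv {ι κ : Type} {S : Set (κ → K)}
    (hS : IsZariskiDense K S) (e : κ ≃ ι) :
    IsZariskiDense K ((fun t : ι → K => t ∘ e) ⁻¹' S) := by
  intro g hg
  obtain ⟨t, ht, hgt⟩ := hS (rename e.symm g)
    ((map_ne_zero_iff _ (rename_injective _ e.symm.injective)).2 hg)
  refine ⟨t ∘ e.symm, ?_, by rwa [eval_rename] at hgt⟩
  simpa [Function.comp_assoc] using ht

lemma IsHilbertianField.isZariskiDense_irreducible_map_eval_fin (hK : IsHilbertianField K)
    {r s : ℕ} (hr : 0 < r) {F : MvPolynomial (Fin s) (MvPolynomial (Fin r) K)} (hF : Prime F)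
    (hC : F ∉ Set.range C) : IsZariskiDense K {t : Fin r → K | Irreducible (map (eval t) F)} := by
  let p : MvPolynomial (Fin s) (RatFuncField K (Fin r)) := map (algebraMap _ _) F
  have hp : Irreducible p := (prime_map_algebraMap_of_notMem_range_C hF hC).irreducible
  refine hK r hr _ ⟨s, 1, 1, fun _ => p, fun _ => 1, fun _ => hp, ⟨0, 0, by simp⟩, ?_⟩
  ext t
  simp [p, polySpecializesTo_map_algebraMap_iff]

theorem IsHilbertianField.isZariskiDense_irreducible_map_eval (hK : IsHilbertianField K)
    {ι : Type} [Finite ι] [Nonempty ι] {s : ℕ} {F : MvPolynomial (Fin s) (MvPolynomial ι K)}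
    (hF : Prime F) (hC : F ∉ Set.range C) :
    IsZariskiDense K {t : ι → K | Irreducible (map (eval t) F)} := by
  let e := Finite.equivFin ι
  let E := mapEquiv (Fin s) (renameEquiv K e).toRingEquiv
  have hEF : Prime (E F) := (MulEquiv.prime_iff E).2 hF
  have hEC : E F ∉ Set.range C := by
    rintro ⟨c, hc⟩
    exact hC ⟨(renameEquiv K e).symm c, E.injective (by simp [E, ← hc])⟩
  have hdense := hK.isZariskiDense_irreducible_map_eval_fin Nat.card_pos hEF hEC
  convert hdense.preimage_comp_equiv e.symm using 1
  ext t
  have heval : (eval (t ∘ e.symm)).comp (renameEquiv K e).toRingEquiv.toRingHom = eval t := by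
    ext <;> simp
  simp [E, map_map, ← heval]

end Specialization

section GenericSubstitution

variable (K : Type) [Field K] (s D : ℕ)

/-- The constant monomial, which indexes the coefficient `Λ₀`. -/
instance : Zero (MonLE s D) := ⟨⟨0, by simp⟩⟩

/-- The substitution `P(T, Y) ↦ P(U_Λ(Y), Y)`, where `U_Λ` is the generic polynomial of degree `D`,
its coefficient variables being indexed by the monomials themselves. -/
def genericSubst :
    MvPolynomial (Fin 1 ⊕ Fin s) K →ₐ[K] MvPolynomial (Fin s) (MvPolynomial (MonLE s D) K) :=
  aeval (Sum.elim (fun _ => genPoly K s D id) X)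

variable {K} in
lemma map_eval_genericSubst (U : MonLE s D → K) (P : MvPolynomial (Fin 1 ⊕ Fin s) K) :
    map (eval U) (genericSubst K s D P) = polySubstHom K (fun _ => genPolyAt K s D U) P := by
  have hhom : (map (eval U)).comp (genericSubst K s D).toRingHom =
      polySubstHom K (fun _ => genPolyAt K s D U) := by
    refine ringHom_ext (fun c => ?_) ?_
    · simp [genericSubst, polySubstHom, MvPolynomial.algebraMap_apply]
    · rintro (_ | j) <;> simp [genericSubst, polySubstHom, genPoly, genPolyAt]
  exact DFunLike.congr_fun hhom P

open scoped Classical in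
/-- The generic polynomial `U_Λ(Y)` without its constant term, as an element of `K[Y, Λ]`. -/
def genericTail : MvPolynomial (Fin s ⊕ MonLE s D) K :=
  ∑ m ∈ Finset.univ.erase 0, X (Sum.inr m) * rename Sum.inl (monomial m.1 1)

lemma inr_zero_notMem_vars_genericTail : Sum.inr 0 ∉ (genericTail K s D).vars := by
  classical
  intro h
  obtain ⟨m, hm, hvars⟩ := Finset.mem_biUnion.1 (vars_sum_subset _ _ h)
  rcases Finset.mem_union.1 (vars_mul _ _ hvars) with hX | hY
  · rw [vars_X, Finset.mem_singleton] at hX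
    exact Finset.ne_of_mem_erase hm (Sum.inr_injective hX).symm
  · obtain ⟨j, -, hj⟩ := mem_vars_rename _ _ hY
    exact Sum.inl_ne_inr hj

lemma sumAlgEquiv_X_add_genericTail :
    sumAlgEquiv K (Fin s) (MonLE s D) (X (Sum.inr 0) + genericTail K s D) =
      genPoly K s D id := by
  classical
  have hrename (u : MvPolynomial (Fin s) K) :
      sumAlgEquiv K (Fin s) (MonLE s D) (rename Sum.inl u) = map C u :=
    DFunLike.congr_fun (sumAlgEquiv_comp_rename_inl K (Fin s) (MonLE s D)) u
  rw [genPoly, ← Finset.add_sum_erase _ _ (Finset.mem_univ (0 : MonLE s D)), map_add,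
    sumAlgEquiv_X_inr, genericTail, map_sum]
  congr 1
  refine Finset.sum_congr rfl fun m _ => ?_
  simp [hrename, C_mul_monomial]

open scoped Classical in
lemma genericSubst_eq_sumAlgEquiv_elementaryEquiv_rename (P : MvPolynomial (Fin 1 ⊕ Fin s) K) :
    genericSubst K s D P = sumAlgEquiv K (Fin s) (MonLE s D)
      (elementaryEquiv (Sum.inr 0) (genericTail K s D) (inr_zero_notMem_vars_genericTail K s D)
        (rename (Sum.elim (fun _ => Sum.inr 0) Sum.inl) P)) := by
  have hhom : genericSubst K s D = (sumAlgEquiv K (Fin s) (MonLE s D)).toAlgHom.comp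
      ((elementaryHom (Sum.inr 0) (genericTail K s D)).comp
        (rename (Sum.elim (fun _ => Sum.inr 0) Sum.inl))) := by
    refine algHom_ext ?_
    rintro (_ | j)
    · simp [genericSubst, elementaryHom_X_self, ← sumAlgEquiv_X_add_genericTail]
    · simp [genericSubst, elementaryHom_X_of_ne]
  exact DFunLike.congr_fun hhom P

variable {K}

lemma prime_genericSubst {P : MvPolynomial (Fin 1 ⊕ Fin s) K} (hP : Prime P) :
    Prime (genericSubst K s D P) := by
  have hinj : Function.Injective
      (Sum.elim (fun _ => Sum.inr 0) Sum.inl : Fin 1 ⊕ Fin s → Fin s ⊕ MonLE s D) :=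
    (Function.injective_of_subsingleton _).sumElim Sum.inl_injective fun _ _ => Sum.inr_ne_inl
  rw [genericSubst_eq_sumAlgEquiv_elementaryEquiv_rename, MulEquiv.prime_iff, MulEquiv.prime_iff,
    prime_rename_iff_of_injective hinj]
  exact hP

variable (K) in
open scoped Classical in
/-- The `K`-algebra homomorphism `K[Λ][Y] → K[T, Y]` sending `Λ₀` to `T` and the other `Λ_m` to
zero; it is a left inverse of `genericSubst`. -/
def genericRetraction :
    MvPolynomial (Fin s) (MvPolynomial (MonLE s D) K) →ₐ[K] MvPolynomial (Fin 1 ⊕ Fin s) K :=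
  (aeval (Sum.elim (X ∘ Sum.inr) (Pi.single 0 (X (Sum.inl 0))))).comp
    (sumAlgEquiv K (Fin s) (MonLE s D)).symm.toAlgHom

lemma genericRetraction_genPoly :
    genericRetraction K s D (genPoly K s D id) = X (Sum.inl 0) := by
  classical
  let evalVars : MvPolynomial (Fin s ⊕ MonLE s D) K →ₐ[K] MvPolynomial (Fin 1 ⊕ Fin s) K :=
    aeval (Sum.elim (X ∘ Sum.inr) (Pi.single 0 (X (Sum.inl 0))))
  have htail : evalVars (genericTail K s D) = 0 := by
    rw [genericTail, map_sum]
    refine Finset.sum_eq_zero fun m hm => ?_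
    rw [map_mul, aeval_X, Sum.elim_inr, Pi.single_eq_of_ne (Finset.ne_of_mem_erase hm), zero_mul]
  calc genericRetraction K s D (genPoly K s D id)
      = evalVars (X (Sum.inr 0) + genericTail K s D) := by
        rw [← sumAlgEquiv_X_add_genericTail]
        exact congrArg evalVars ((sumAlgEquiv K (Fin s) (MonLE s D)).symm_apply_apply _)
    _ = X (Sum.inl 0) := by simp [htail, evalVars, -aeval_eq_bind₁]

lemma genericRetraction_genericSubst (P : MvPolynomial (Fin 1 ⊕ Fin s) K) :
    genericRetraction K s D (genericSubst K s D P) = P := by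
  have hhom : (genericRetraction K s D).comp (genericSubst K s D) = AlgHom.id K _ := by
    refine algHom_ext ?_
    rintro (i | j)
    · simp [genericSubst, genericRetraction_genPoly, Subsingleton.elim i 0]
    · simp [genericSubst, genericRetraction]
  exact DFunLike.congr_fun hhom P

open scoped Classical in
lemma genericRetraction_C (c : MvPolynomial (MonLE s D) K) :
    genericRetraction K s D (C c) = rename Sum.inl (aeval (Pi.single 0 (X 0)) c) := by
  have hhom : (genericRetraction K s D).comp
      (IsScalarTower.toAlgHom K (MvPolynomial (MonLE s D) K) _) =
      (rename Sum.inl).comp (aeval (Pi.single 0 (X 0))) := by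
    refine algHom_ext fun m => ?_
    obtain rfl | hm := eq_or_ne m 0 <;> simp [genericRetraction, algebraMap_eq, *]
  exact DFunLike.congr_fun hhom c

lemma genericSubst_notMem_range_C {P : MvPolynomial (Fin 1 ⊕ Fin s) K}
    (hP : ¬ ∃ q : MvPolynomial (Fin 1) K, P = rename Sum.inl q) :
    genericSubst K s D P ∉ Set.range C := by
  classical
  rintro ⟨c, hc⟩
  refine hP ⟨aeval (Pi.single 0 (X 0)) c, ?_⟩
  rw [← genericRetraction_C, hc, genericRetraction_genericSubst]

end GenericSubstitution

theorem stmt_14_general (K : Type) [Field K] (hK : IsHilbertianField K)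
    (s : ℕ) (P : MvPolynomial (Fin 1 ⊕ Fin s) K) (hPirr : Irreducible P)
    (hPY : ¬ ∃ q : MvPolynomial (Fin 1) K, P = rename Sum.inl q) (D : ℕ) :
    IsZariskiDense K {U : MonLE s D → K |
      Irreducible (polySubstHom K (fun _ : Fin 1 => genPolyAt K s D U) P)} := by
  have hprime : Prime (genericSubst K s D P) := prime_genericSubst s D hPirr.prime
  have hnonconst : genericSubst K s D P ∉ Set.range C := genericSubst_notMem_range_C s D hPY
  have hdense := hK.isZariskiDense_irreducible_map_eval hprime hnonconst
  simpa only [map_eval_genericSubst] using hdense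

/-- (Schinzel hypothesis for `K[Y]`.) `K` Hilbertian of characteristic
`0`, `P(T,Y) ∈ K[T,Y]` irreducible with `deg_Y P ≥ 1` (i.e. `P ∉ K[T]`), `D ≥ 0`.  The
set of polynomials `U(Y) ∈ K[Y]_D` such that `P(U(Y),Y)` is irreducible in `K[Y]` is
Zariski-dense in `K[Y]_D ≅ K^{N_D}`. -/
theorem stmt_14 (K : Type) [Field K] [CharZero K] (hK : IsHilbertianField K)
    (s : ℕ) (P : MvPolynomial (Fin 1 ⊕ Fin s) K)
    (hPirr : Irreducible P)
    (hPY : ¬ ∃ q : MvPolynomial (Fin 1) K, P = MvPolynomial.rename Sum.inl q)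
    (D : ℕ) :
    IsZariskiDense K {U : MonLE s D → K |
      Irreducible (polySubstHom K (fun _ : Fin 1 => genPolyAt K s D U) P)} :=
  stmt_14_general K hK s P hPirr hPY D

end
end

section
/- Let K be a field, p a prime ideal of K[Y], and Q_{S,R}(Λ,Y) a quasi-generic polynomial of base (S,R). Then the ideal generated by p and Q_{S,R} in K[Λ,Y] is a prime ideal. -/
open MvPolynomial

noncomputable section

/-!
Exchanging the roles of `Λ` and `Y`, a quasi-generic polynomial becomes an affine form
`L = ∑ Λ_i c_i + r` over `A = K[Y]` in which some `c_j` is a unit (`Q_1 = 1`). Substituting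
`Λ_j - c_j⁻¹ L` for `Λ_j` is an endomorphism `φ` of `A[Λ]` that kills `L`, fixes `A` and is the
identity modulo `L`. Hence `⟨p, L⟩ = φ⁻¹(p A[Λ])`, the preimage of a prime ideal.
-/

theorem sup_span_singleton_eq_comap {A : Type*} [CommRing A] {P : Ideal A} {L : A} {φ : A →+* A}
    (hP : P ≤ P.comap φ) (hL : φ L ∈ P) (hφ : ∀ f, f - φ f ∈ Ideal.span {L}) :
    P ⊔ Ideal.span {L} = P.comap φ := by
  refine le_antisymm (sup_le hP ((Ideal.span_singleton_le_iff_mem _).mpr hL)) fun f hf => ?_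
  rw [← add_sub_cancel (φ f) f]
  exact Submodule.add_mem_sup hf (hφ f)

section AffineForm

variable {ι A : Type*} [CommRing A]

theorem isPrime_map_mvPolynomial_C (p : Ideal A) [p.IsPrime] :
    (p.map (C : A →+* MvPolynomial ι A)).IsPrime := by
  rw [← Ideal.mk_ker (I := p), ← MvPolynomial.ker_map]
  exact RingHom.ker_isPrime _

theorem sub_aeval_mem_of_forall_X_sub_mem {I : Ideal (MvPolynomial ι A)}
    {x : ι → MvPolynomial ι A} (hx : ∀ i, X i - x i ∈ I) (f : MvPolynomial ι A) :
    f - aeval x f ∈ I := by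
  have mk_eq : Ideal.Quotient.mkₐ A I = (Ideal.Quotient.mkₐ A I).comp (aeval x) := by
    refine algHom_ext fun i => ?_
    rw [AlgHom.comp_apply, aeval_X]
    exact Ideal.Quotient.eq.mpr (hx i)
  exact Ideal.Quotient.eq.mp (DFunLike.congr_fun mk_eq f)

/-- The affine form `∑ i, c i X i + r` with coefficients `c` and constant term `r`. -/
def affineForm [Fintype ι] (c : ι → A) (r : A) : MvPolynomial ι A :=
  ∑ i, X i * C (c i) + C r

/-- The substitution `X j ↦ X j - b L`, the other variables being fixed. When `L` is an affine
form whose coefficient at `X j` is inverse to `b`, it solves `L = 0` for `X j`. -/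
def eliminate [DecidableEq ι] (j : ι) (b : A) (L : MvPolynomial ι A) :
    MvPolynomial ι A →ₐ[A] MvPolynomial ι A :=
  aeval (X - Pi.single j (C b * L))

theorem sub_eliminate_mem_span [DecidableEq ι] (j : ι) (b : A) (L f : MvPolynomial ι A) :
    f - eliminate j b L f ∈ Ideal.span {L} := by
  refine sub_aeval_mem_of_forall_X_sub_mem (fun i => ?_) f
  rcases eq_or_ne i j with rfl | hij
  · simp [Ideal.mem_span_singleton]
  · simp [hij]

variable [Fintype ι]

theorem eliminate_affineForm [DecidableEq ι] (j : ι) (b : A) (L : MvPolynomial ι A) (c : ι → A)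
    (r : A) : eliminate j b L (affineForm c r) = affineForm c r - C (b * c j) * L := by
  simp only [eliminate, affineForm, map_add, map_sum, map_mul, aeval_X, algHom_C, algebraMap_eq,
    Pi.sub_apply, Pi.single_apply, sub_mul, ite_mul, zero_mul, Finset.sum_sub_distrib,
    Finset.sum_ite_eq', Finset.mem_univ, if_true]
  ring

theorem isPrime_map_C_sup_span_affineForm (p : Ideal A) [p.IsPrime] {c : ι → A} {j : ι}
    (hc : IsUnit (c j)) (r : A) :
    (p.map C ⊔ Ideal.span {affineForm c r}).IsPrime := by
  classical
  obtain ⟨b, hb⟩ := hc.exists_left_inv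
  let φ := eliminate j b (affineForm c r)
  have map_C_le : p.map C ≤ (p.map C).comap (φ : MvPolynomial ι A →+* MvPolynomial ι A) :=
    Ideal.map_le_iff_le_comap.mpr fun a ha => by
      simpa [Ideal.mem_comap, algebraMap_eq] using Ideal.mem_map_of_mem C ha
  have φ_affineForm : φ (affineForm c r) ∈ p.map C := by
    rw [eliminate_affineForm, hb, C_1, one_mul, sub_self]
    exact zero_mem _
  have := isPrime_map_mvPolynomial_C (ι := ι) p
  rw [sup_span_singleton_eq_comap map_C_le φ_affineForm (sub_eliminate_mem_span j b _)]
  exact Ideal.comap_isPrime _ _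

end AffineForm

theorem stmt_15_general {k σ ι : Type*} [CommRing k] [Fintype ι] (q : ι → MvPolynomial σ k)
    {j : ι} (hq : IsUnit (q j)) (r : MvPolynomial σ k) (p : Ideal (MvPolynomial σ k))
    [p.IsPrime] :
    (p.map (MvPolynomial.map (C : k →+* MvPolynomial ι k)) ⊔
      Ideal.span {∑ i, C (X i) * MvPolynomial.map C (q i) + MvPolynomial.map C r}).IsPrime := by
  let e : MvPolynomial ι (MvPolynomial σ k) →+* MvPolynomial σ (MvPolynomial ι k) :=
    commAlgEquiv k ι σ
  have e_comp_C : e.comp C = MvPolynomial.map C := RingHom.ext fun f => commAlgEquiv_C f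
  have e_affineForm : e (affineForm q r) =
      ∑ i, C (X i) * MvPolynomial.map C (q i) + MvPolynomial.map C r := by
    simp [e, affineForm]
  rw [← e_affineForm, ← e_comp_C, ← Ideal.map_map, ← Set.image_singleton, ← Ideal.map_span,
    ← Ideal.map_sup]
  have := isPrime_map_C_sup_span_affineForm p hq r
  exact Ideal.map_isPrime_of_equiv (commAlgEquiv k ι σ)

theorem quasiGen_eq_sum_C_mul_map (K : Type) [Field K] {s n : ℕ} (m : Fin (n + 1) → (Fin s →₀ ℕ))
    (R : MvPolynomial (Fin s) K) :
    quasiGen K m R =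
      ∑ i, C (X i) * MvPolynomial.map C (monomial (m i) 1) + MvPolynomial.map C R := by
  simp [quasiGen, map_monomial, C_mul_monomial]

/-- (First step of the key lemma.) For any prime ideal `p ⊆ K[Y]` and
any quasi-generic polynomial `Q_{S,R}(Λ,Y)` of base `(S,R)`, the ideal `⟨p, Q_{S,R}⟩` of
`K[Λ,Y]` is prime. -/
theorem stmt_15 (K : Type) [Field K] (s n D : ℕ)
    (m : Fin (n + 1) → (Fin s →₀ ℕ)) (hdeg : ∀ i, (m i).degree ≤ D)
    (hm0 : m 0 = 0) (hminj : Function.Injective m)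
    (R : MvPolynomial (Fin s) K)
    (p : Ideal (MvPolynomial (Fin s) K)) (hp : p.IsPrime) :
    (Ideal.map (MvPolynomial.map (MvPolynomial.C : K →+* MvPolynomial (Fin (n + 1)) K)) p ⊔
      Ideal.span {quasiGen K m R}).IsPrime := by
  rw [quasiGen_eq_sum_C_mul_map]
  exact stmt_15_general (fun i => monomial (m i) 1) (j := 0) (by simp [hm0]) R p

end
end

section
/- Let K be a field, p a prime ideal of K[Y], and Q_{S,R}(Λ,Y) a quasi-generic polynomial of base (S,R) such that the triple (p,S,R) satisfies hypothesis (H). Let p̃_Λ be the extension of p to K(Λ)[Y] and B_Λ = K(Λ)[Y]/p̃_Λ. Then the image of Q_{S,R} in B_Λ is not an invertible element of B_Λ. -/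
open MvPolynomial

noncomputable section

/-!
Write `B = K[Y]/p` and let `θ ∈ B[Λ₁, …, Λₙ]` be the image of `Q_{S,R} - Λ₀`. Up to inverting
`K[Λ] \ {0}`, the ring `B_Λ` is `B[Λ]`, so `Q_{S,R}` is invertible in `B_Λ` iff `Λ₀ + θ` divides a
nonzero `h ∈ K[Λ]` in `B[Λ]`. Substituting `Λ₀ = -θ` in `h` shows that `θ` is then algebraic over
`K[Λ₁, …, Λₙ]`. Hence some `c • θ` with `0 ≠ c ∈ K[Λ₁, …, Λₙ]` has coefficients integral over `K`,
and so does `θ`, since `K`-linear functionals on `B` extend coefficientwise to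
`K[Λ₁, …, Λₙ]`-linear maps `B[Λ₁, …, Λₙ] → K[Λ₁, …, Λₙ]`. Thus every value of `φ_{S,R}`, being
the class of a value of `θ` at a `K`-point, is zero.
-/

section AlgebraicCoefficients

variable {σ R K B : Type*}

theorem map_linearMap_map_algebraMap_mul [CommSemiring R] [CommSemiring B] [Algebra R B]
    (f : B →ₗ[R] R) (c : MvPolynomial σ R) (θ : MvPolynomial σ B) :
    AddMonoidAlgebra.map f.toAddMonoidHom (map (algebraMap R B) c * θ) =
      c * AddMonoidAlgebra.map f.toAddMonoidHom θ := by
  classical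
  ext d
  rw [coeff_addMonoidAlgebraMap, coeff_mul, coeff_mul]
  simp only [coeff_addMonoidAlgebraMap, coeff_map, ← Algebra.smul_def, map_sum, map_smul,
    smul_eq_mul, LinearMap.toAddMonoidHom_coe]

variable [Field K] [CommRing B] [Algebra K B]

theorem coeff_mem_of_coeff_map_mul_mem (W : Submodule K B) {c : MvPolynomial σ K} (hc : c ≠ 0)
    {θ : MvPolynomial σ B} (hW : ∀ d, (map (algebraMap K B) c * θ).coeff d ∈ W) (d : σ →₀ ℕ) :
    θ.coeff d ∈ W := by
  by_contra hd
  obtain ⟨f, hfd, hfW⟩ := Submodule.exists_le_ker_of_notMem hd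
  have hmul : c * AddMonoidAlgebra.map f.toAddMonoidHom θ = 0 := by
    rw [← map_linearMap_map_algebraMap_mul]
    ext e
    exact hfW (hW e)
  have hθ := (mul_eq_zero.mp hmul).resolve_left hc
  exact hfd congr(coeff d $hθ)

attribute [local instance] algebraMvPolynomial

theorem isIntegral_coeff_of_isAlgebraic {θ : MvPolynomial σ B}
    (hθ : IsAlgebraic (MvPolynomial σ K) θ) (d : σ →₀ ℕ) : IsIntegral K (θ.coeff d) := by
  obtain ⟨c, hc, hcθ⟩ := hθ.exists_integral_multiple
  rw [Algebra.smul_def, algebraMap_def, isIntegral_iff_isIntegral_coeff] at hcθ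
  exact coeff_mem_of_coeff_map_mul_mem (integralClosure K B).toSubmodule hc hcθ d

theorem isIntegral_eval_of_isAlgebraic {θ : MvPolynomial σ B}
    (hθ : IsAlgebraic (MvPolynomial σ K) θ) (a : σ → K) :
    IsIntegral K (eval (fun i ↦ algebraMap K B (a i)) θ) :=
  eval_mem (s := integralClosure K B) (fun d _ ↦ isIntegral_coeff_of_isAlgebraic hθ d)
    fun i ↦ (integralClosure K B).algebraMap_mem (a i)

end AlgebraicCoefficients

section LinearDivisor

variable {R S : Type*} {n : ℕ}

theorem finSuccEquiv_map [CommSemiring R] [CommSemiring S] (f : R →+* S)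
    (p : MvPolynomial (Fin (n + 1)) R) :
    finSuccEquiv S n (map f p) = (finSuccEquiv R n p).map (map f) := by
  ext i d
  simp only [finSuccEquiv_coeff_coeff, coeff_map, Polynomial.coeff_map]

theorem finSuccEquiv_rename_succ [CommSemiring R] (p : MvPolynomial (Fin n) R) :
    finSuccEquiv R n (rename Fin.succ p) = Polynomial.C p := by
  have h : (finSuccEquiv R n).toAlgHom.comp (rename Fin.succ) = Polynomial.CAlgHom := by
    ext i : 1
    simp [finSuccEquiv_X_succ]
  exact congr($h p)

attribute [local instance] algebraMvPolynomial

theorem isAlgebraic_of_X_zero_add_rename_succ_dvd [CommRing R] [CommRing S] [Algebra R S]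
    {θ : MvPolynomial (Fin n) S} {h : MvPolynomial (Fin (n + 1)) R} (h_ne : h ≠ 0)
    (h_dvd : X 0 + rename Fin.succ θ ∣ map (algebraMap R S) h) :
    IsAlgebraic (MvPolynomial (Fin n) R) θ := by
  have h_root : ((finSuccEquiv R n h).map (map (algebraMap R S))).IsRoot (-θ) := by
    rw [← Polynomial.dvd_iff_isRoot, map_neg, sub_neg_eq_add, ← finSuccEquiv_rename_succ,
      ← finSuccEquiv_X_zero, ← map_add, ← finSuccEquiv_map]
    exact map_dvd (finSuccEquiv S n) h_dvd
  have h_neg : IsAlgebraic (MvPolynomial (Fin n) R) (-θ) :=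
    ⟨finSuccEquiv R n h, by simpa, by rwa [← Polynomial.eval_map_algebraMap]⟩
  exact neg_neg θ ▸ h_neg.neg

end LinearDivisor

section ClearingDenominators

theorem ideal_map_map_comp {τ R S T : Type*} [CommSemiring R] [CommSemiring S] [CommSemiring T]
    (f : S →+* T) (g : R →+* S) (I : Ideal (MvPolynomial τ R)) :
    I.map (map (f.comp g)) = (I.map (map g)).map (map f) := by
  rw [Ideal.map_map]
  exact congr(I.map $(RingHom.ext fun P ↦ (map_map g f P).symm))

attribute [local instance] algebraMvPolynomial

theorem isUnit_mk_map_map_iff_exists_dvd {τ A F : Type*} [CommRing A] [CommRing F] [Algebra A F]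
    (M : Submonoid A) [IsLocalization M F] (I : Ideal (MvPolynomial τ A))
    (Q : MvPolynomial τ A) :
    IsUnit (Ideal.Quotient.mk (I.map (map (algebraMap A F))) (map (algebraMap A F) Q)) ↔
      ∃ h ∈ M, Ideal.Quotient.mk I Q ∣ Ideal.Quotient.mk I (C h) := by
  have h_unit := IsLocalization.algebraMap_isUnit_iff
    (Algebra.algebraMapSubmonoid (MvPolynomial τ A ⧸ I) (M.map (C : A →+* MvPolynomial τ A)))
    (S := MvPolynomial τ F ⧸ I.map (algebraMap (MvPolynomial τ A) (MvPolynomial τ F)))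
    (x := Ideal.Quotient.mk I Q)
  refine h_unit.trans ?_
  simp [Algebra.algebraMapSubmonoid]

end ClearingDenominators

section LiftParams

variable {σ τ K B : Type*} [CommRing K] [CommRing B] [Algebra K B]

/-- The homomorphism `K[Λ][Y] → B[Λ]` that fixes `Λ` and maps `K[Y]` to `B` by `g`. -/
def liftParams (σ : Type*) (g : MvPolynomial τ K →ₐ[K] B) :
    MvPolynomial τ (MvPolynomial σ K) →+* MvPolynomial σ B :=
  eval₂Hom (map (algebraMap K B)) fun j ↦ C (g (X j))

theorem liftParams_C (g : MvPolynomial τ K →ₐ[K] B) (h : MvPolynomial σ K) :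
    liftParams σ g (C h) = map (algebraMap K B) h :=
  eval₂Hom_C _ _ _

theorem liftParams_map_C (g : MvPolynomial τ K →ₐ[K] B) (f : MvPolynomial τ K) :
    liftParams σ g (map C f) = C (g f) := by
  have h : (liftParams σ g).comp (map C) = C.comp g.toRingHom := by
    refine ringHom_ext (fun a ↦ ?_) fun j ↦ ?_
    · have hg : g (C a) = algebraMap K B a := g.commutes a
      simp [liftParams, hg]
    · simp [liftParams]
  exact congr($h f)

theorem liftParams_dvd_of_mk_dvd (g : MvPolynomial τ K →ₐ[K] B) {p : Ideal (MvPolynomial τ K)}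
    (hp : p ≤ RingHom.ker g) {P Q : MvPolynomial τ (MvPolynomial σ K)}
    (h : Ideal.Quotient.mk (p.map (map C)) P ∣ Ideal.Quotient.mk (p.map (map C)) Q) :
    liftParams σ g P ∣ liftParams σ g Q := by
  have h_ker : p.map (map C) ≤ RingHom.ker (liftParams σ g) := Ideal.map_le_iff_le_comap.mpr
    fun f hf ↦ by simp [RingHom.mem_ker, liftParams_map_C, RingHom.mem_ker.mp (hp hf)]
  exact map_dvd (Ideal.Quotient.lift _ _ h_ker) h

theorem liftParams_monomial (g : MvPolynomial τ K →ₐ[K] B) (d : τ →₀ ℕ) (c : MvPolynomial σ K) :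
    liftParams σ g (monomial d c) = map (algebraMap K B) c * C (g (monomial d 1)) := by
  rw [← liftParams_map_C, ← liftParams_C, ← map_mul, map_monomial, C_mul_monomial, C_1, mul_one]

end LiftParams

section QuasiGeneric

variable {K : Type} {B : Type*} [Field K] [CommRing B] [Algebra K B] {s n : ℕ}

/-- The image in `B[Λ₁, …, Λₙ]` of `Q_{S,R} - Λ₀` under `g : K[Y] → B`; the variable `Λᵢ₊₁` of
`Q_{S,R}` becomes `X i`. -/
def quasiGenTail (g : MvPolynomial (Fin s) K →ₐ[K] B) (m : Fin (n + 1) → (Fin s →₀ ℕ))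
    (R : MvPolynomial (Fin s) K) : MvPolynomial (Fin n) B :=
  (∑ i : Fin n, X i * C (g (monomial (m i.succ) 1))) + C (g R)

theorem liftParams_quasiGen (g : MvPolynomial (Fin s) K →ₐ[K] B) {m : Fin (n + 1) → (Fin s →₀ ℕ)}
    (hm0 : m 0 = 0) (R : MvPolynomial (Fin s) K) :
    liftParams (Fin (n + 1)) g (quasiGen K m R) = X 0 + rename Fin.succ (quasiGenTail g m R) := by
  simp only [quasiGen, quasiGenTail, map_add, map_sum, map_mul, liftParams_monomial,
    liftParams_map_C, map_X, rename_X, rename_C, Fin.sum_univ_succ, hm0, add_assoc]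
  simp

theorem eval_quasiGenTail (g : MvPolynomial (Fin s) K →ₐ[K] B) (m : Fin (n + 1) → (Fin s →₀ ℕ))
    (R : MvPolynomial (Fin s) K) (a : Fin (n + 1) → K) :
    eval (fun i ↦ algebraMap K B (a i.succ)) (quasiGenTail g m R) =
      g ((∑ i ∈ Finset.univ.erase 0, monomial (m i) (a i)) + R) := by
  have h_monomial (i : Fin (n + 1)) :
      algebraMap K B (a i) * g (monomial (m i) 1) = g (monomial (m i) (a i)) := by
    rw [← Algebra.smul_def, ← map_smul, smul_monomial, smul_eq_mul, mul_one]
  simp [quasiGenTail, h_monomial, Fin.univ_succ]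

end QuasiGeneric

theorem stmt_16_general {K : Type} [Field K] {s n : ℕ} {m : Fin (n + 1) → (Fin s →₀ ℕ)}
    (hm0 : m 0 = 0) {R : MvPolynomial (Fin s) K} {p : Ideal (MvPolynomial (Fin s) K)}
    (hH : HypothesisH K p m R) :
    ¬ IsUnit (Ideal.Quotient.mk
      (Ideal.map (MvPolynomial.map
        ((algebraMap (MvPolynomial (Fin (n + 1)) K) (RatFuncField K (Fin (n + 1)))).comp
          MvPolynomial.C)) p)
      (MvPolynomial.map
        (algebraMap (MvPolynomial (Fin (n + 1)) K) (RatFuncField K (Fin (n + 1))))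
        (quasiGen K m R))) := by
  obtain ⟨a, ha⟩ := hH
  contrapose! ha with h_unit
  rw [ideal_map_map_comp, isUnit_mk_map_map_iff_exists_dvd (nonZeroDivisors _)] at h_unit
  obtain ⟨h, h_mem, h_dvd⟩ := h_unit
  have h_tail_dvd := liftParams_dvd_of_mk_dvd (Ideal.Quotient.mkₐ K p)
    (Ideal.Quotient.mkₐ_ker K p).ge h_dvd
  rw [liftParams_quasiGen _ hm0, liftParams_C] at h_tail_dvd
  have h_alg := isAlgebraic_of_X_zero_add_rename_succ_dvd (nonZeroDivisors.ne_zero h_mem) h_tail_dvd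
  have h_int := isIntegral_eval_of_isAlgebraic h_alg fun i ↦ a i.succ
  rwa [eval_quasiGenTail] at h_int

/-- (Second step of the key lemma.) If `(p,S,R)` satisfies hypothesis
(H), then the image of the quasi-generic polynomial `Q_{S,R}` in
`B_Λ = K(Λ)[Y]/p̃_Λ` is not invertible. -/
theorem stmt_16 (K : Type) [Field K] (s n D : ℕ)
    (m : Fin (n + 1) → (Fin s →₀ ℕ)) (hdeg : ∀ i, (m i).degree ≤ D)
    (hm0 : m 0 = 0) (hminj : Function.Injective m)
    (R : MvPolynomial (Fin s) K)
    (p : Ideal (MvPolynomial (Fin s) K)) (hp : p.IsPrime)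
    (hH : HypothesisH K p m R) :
    ¬ IsUnit (Ideal.Quotient.mk
      (Ideal.map (MvPolynomial.map
        ((algebraMap (MvPolynomial (Fin (n + 1)) K) (RatFuncField K (Fin (n + 1)))).comp
          MvPolynomial.C)) p)
      (MvPolynomial.map
        (algebraMap (MvPolynomial (Fin (n + 1)) K) (RatFuncField K (Fin (n + 1))))
        (quasiGen K m R))) := by
  exact stmt_16_general hm0 hH
end
end

section
/- Let K be a field and p_T a prime ideal of K[T,Y] with p_T ∩ K[T] = {0} whose extension p̃_T to K(T)[Y] is a maximal ideal such that the field K(T)[Y]/p̃_T is a finite separable extension of K(T) of degree n. Then there exists a Hilbert subset H of K^r such that for every t ∈ H, the specialized ideal p_t is a maximal ideal of K[Y] and K[Y]/p_t is a field extension of K of degree n. -/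
open MvPolynomial

noncomputable section

/-!
If `K(T)[Y]/p̃_T` is generated by one element over `K(T)`, then `Y_i ↦ h_i(X)`, `X ↦ w(Y)` are
mutually inverse isomorphisms `K(T)[Y]/p̃_T ≅ K(T)[X]/(f)` for a monic irreducible `f` of degree
`n`. That they are well defined and mutually inverse amounts to divisibilities by `f` and
memberships in `p̃_T`. Since `f` is monic, the former descend to every subring `A ⊇ K[T]` of `K(T)`
over which they can be written down; the latter, finitely many, do so once `A` contains a suitable
finite set `S` of coefficients. Taking for `A` the rational functions regular at `t`, evaluation at
`t` turns the isomorphism into `K[Y]/p_t ≅ K[X]/(f_t)`, which is a field of degree `n` as soon as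
`f_t` is irreducible.

The condition that `x ∈ S` be regular at `t` is imposed through the irreducible polynomial `X - x`,
not through a common denominator `g`: over a finite field a nonzero `g` may vanish at every point,
and then `g ≠ 0` does not define a nonempty open set.
-/

section MonogenicPresentation

open scoped Polynomial

section CommSemiring

variable {R R' σ : Type*} [CommSemiring R] [CommSemiring R']

theorem map_aeval_mvPolynomial (φ : R →+* R') (h : σ → R[X]) (p : MvPolynomial σ R) :
    (aeval h p).map φ = aeval (fun i => (h i).map φ) (map φ p) := by
  induction p using MvPolynomial.induction_on with
  | C a => simp [Polynomial.algebraMap_eq]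
  | add p q hp hq => simp [hp, hq]
  | mul_X p i hp => simp [hp]

theorem map_aeval_polynomial (φ : R →+* R') (w : MvPolynomial σ R) (q : R[X]) :
    map φ (Polynomial.aeval w q) = Polynomial.aeval (map φ w) (q.map φ) :=
  Polynomial.map_aeval_eq_aeval_map (by ext; simp [MvPolynomial.algebraMap_eq]) q w

end CommSemiring

variable {R R' σ : Type*} [CommRing R] [CommRing R']

/-- `Y_i ↦ h i` and `X ↦ w` induce mutually inverse isomorphisms between `R[Y]/I` and `R[X]/(f)`.
This is spelled out as divisibilities and memberships so that it can be transported along ring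
homomorphisms without comparing quotients of base changes. -/
structure IsMonogenicPresentation (I : Ideal (MvPolynomial σ R)) (f : R[X]) (h : σ → R[X])
    (w : MvPolynomial σ R) : Prop where
  dvd_aeval : ∀ p ∈ I, f ∣ aeval h p
  dvd_aeval_sub_X : f ∣ aeval h w - Polynomial.X
  X_sub_aeval_mem : ∀ i, X i - Polynomial.aeval w (h i) ∈ I
  aeval_mem : Polynomial.aeval w f ∈ I

namespace IsMonogenicPresentation

variable {I : Ideal (MvPolynomial σ R)} {f : R[X]} {h : σ → R[X]} {w : MvPolynomial σ R}

theorem dvd_aeval_of_mem_map {φ : R →+* R'} {f : R'[X]} {h : σ → R'[X]}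
    (hI : ∀ p ∈ I, f ∣ aeval h (MvPolynomial.map φ p)) :
    ∀ p ∈ I.map (MvPolynomial.map φ), f ∣ aeval h p := by
  have hle : I.map (MvPolynomial.map φ) ≤ (Ideal.span {f}).comap (aeval h) :=
    Ideal.map_le_iff_le_comap.2 fun p hp => Ideal.mem_span_singleton.2 (hI p hp)
  exact fun p hp => Ideal.mem_span_singleton.1 (hle hp)

theorem map (H : IsMonogenicPresentation I f h w) (φ : R →+* R') :
    IsMonogenicPresentation (I.map (MvPolynomial.map φ)) (f.map φ) (fun i => (h i).map φ)
      (MvPolynomial.map φ w) where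
  dvd_aeval := dvd_aeval_of_mem_map fun p hp => by
    rw [← map_aeval_mvPolynomial]
    exact Polynomial.map_dvd φ (H.dvd_aeval p hp)
  dvd_aeval_sub_X := by
    simpa [map_aeval_mvPolynomial] using Polynomial.map_dvd φ H.dvd_aeval_sub_X
  X_sub_aeval_mem i := by
    simpa [map_aeval_polynomial] using
      Ideal.mem_map_of_mem (MvPolynomial.map φ) (H.X_sub_aeval_mem i)
  aeval_mem := by
    simpa [map_aeval_polynomial] using Ideal.mem_map_of_mem (MvPolynomial.map φ) H.aeval_mem

/-- The homomorphism `R[X]/(f) → R[Y]/I` given by `X ↦ w`. -/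
def toQuotient (H : IsMonogenicPresentation I f h w) :
    AdjoinRoot f →ₐ[R] MvPolynomial σ R ⧸ I :=
  AdjoinRoot.liftAlgHom f (Algebra.ofId R _) (Ideal.Quotient.mk I w) <|
    (Polynomial.aeval_algHom_apply (Ideal.Quotient.mkₐ R I) w f).trans
      (Ideal.Quotient.eq_zero_iff_mem.2 H.aeval_mem)

theorem toQuotient_mk (H : IsMonogenicPresentation I f h w) (q : R[X]) :
    H.toQuotient (AdjoinRoot.mk f q) = Ideal.Quotient.mk I (Polynomial.aeval w q) :=
  (AdjoinRoot.liftAlgHom_mk ..).trans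
    (Polynomial.aeval_algHom_apply (Ideal.Quotient.mkₐ R I) w q)

/-- The homomorphism `R[Y]/I → R[X]/(f)` given by `Y_i ↦ h i`. -/
def ofQuotient (H : IsMonogenicPresentation I f h w) :
    MvPolynomial σ R ⧸ I →ₐ[R] AdjoinRoot f :=
  Ideal.Quotient.liftₐ I ((AdjoinRoot.mkₐ f).comp (aeval h))
    fun p hp => AdjoinRoot.mk_eq_zero.2 (H.dvd_aeval p hp)

theorem ofQuotient_mk (H : IsMonogenicPresentation I f h w) (p : MvPolynomial σ R) :
    H.ofQuotient (Ideal.Quotient.mk I p) = AdjoinRoot.mk f (aeval h p) :=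
  rfl

/-- The isomorphism `R[X]/(f) ≅ R[Y]/I` encoded by a monogenic presentation. -/
def algEquiv (H : IsMonogenicPresentation I f h w) :
    AdjoinRoot f ≃ₐ[R] MvPolynomial σ R ⧸ I :=
  AlgEquiv.ofAlgHom H.toQuotient H.ofQuotient
    (Ideal.Quotient.algHom_ext R <| MvPolynomial.algHom_ext fun i => by
      change H.toQuotient (H.ofQuotient (Ideal.Quotient.mk I (X i))) = Ideal.Quotient.mk I (X i)
      rw [ofQuotient_mk, aeval_X, toQuotient_mk]
      exact (Ideal.Quotient.eq.2 (H.X_sub_aeval_mem i)).symm)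
    (AdjoinRoot.algHom_ext <| by
      change H.ofQuotient (H.toQuotient (AdjoinRoot.mk f Polynomial.X)) =
        AdjoinRoot.mk f Polynomial.X
      rw [toQuotient_mk, Polynomial.aeval_X, ofQuotient_mk]
      exact AdjoinRoot.mk_eq_mk.2 H.dvd_aeval_sub_X)

theorem exists_of_algEquiv (e : AdjoinRoot f ≃ₐ[R] MvPolynomial σ R ⧸ I) :
    ∃ h w, IsMonogenicPresentation I f h w := by
  choose h hh using fun i => AdjoinRoot.mk_surjective (e.symm (Ideal.Quotient.mk I (X i)))
  obtain ⟨w, hw⟩ := Ideal.Quotient.mk_surjective (e (AdjoinRoot.root f))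
  have mk_aeval (p) : AdjoinRoot.mk f (aeval h p) = e.symm (Ideal.Quotient.mk I p) := by
    have : (AdjoinRoot.mkₐ f).comp (aeval h) = e.symm.toAlgHom.comp (Ideal.Quotient.mkₐ R I) :=
      MvPolynomial.algHom_ext fun i => by simp [hh]
    exact DFunLike.congr_fun this p
  have mk_polynomialAeval (q) :
      Ideal.Quotient.mk I (Polynomial.aeval w q) = e (AdjoinRoot.mk f q) := by
    have : (Ideal.Quotient.mkₐ R I).comp (Polynomial.aeval w) =
        e.toAlgHom.comp (AdjoinRoot.mkₐ f) :=
      Polynomial.algHom_ext (by simp [hw])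
    exact DFunLike.congr_fun this q
  refine ⟨h, w, fun p hp => ?_, ?_, fun i => ?_, ?_⟩
  · rw [← AdjoinRoot.mk_eq_zero, mk_aeval, Ideal.Quotient.eq_zero_iff_mem.2 hp, map_zero]
  · rw [← AdjoinRoot.mk_eq_mk, mk_aeval, hw, e.symm_apply_apply, AdjoinRoot.mk_X]
  · rw [← Ideal.Quotient.eq, mk_polynomialAeval, hh, e.apply_symm_apply]
  · rw [← Ideal.Quotient.eq_zero_iff_mem, mk_polynomialAeval, AdjoinRoot.mk_self, map_zero]

theorem exists_of_powerBasis (pb : PowerBasis R (MvPolynomial σ R ⧸ I)) :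
    ∃ h w, IsMonogenicPresentation I (minpoly R pb.gen) h w :=
  exists_of_algEquiv <| AdjoinRoot.equiv' _ pb
    (by rw [AdjoinRoot.aeval_eq, AdjoinRoot.mk_self]) (minpoly.aeval R pb.gen)

section Field

variable {k : Type*} [Field k] {I : Ideal (MvPolynomial σ k)} {f : k[X]} {h : σ → k[X]}
  {w : MvPolynomial σ k}

theorem isMaximal (H : IsMonogenicPresentation I f h w) (hf : Irreducible f) : I.IsMaximal := by
  have : Fact (Irreducible f) := ⟨hf⟩
  exact Ideal.Quotient.maximal_of_isField I
    (H.algEquiv.symm.toMulEquiv.isField (Field.toIsField (AdjoinRoot f)))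

theorem finrank_quotient (H : IsMonogenicPresentation I f h w) (hf : f ≠ 0) :
    Module.finrank k (MvPolynomial σ k ⧸ I) = f.natDegree :=
  H.algEquiv.symm.toLinearEquiv.finrank_eq.trans (AdjoinRoot.powerBasis hf).finrank

theorem exists_monic_irreducible_of_powerBasis [I.IsMaximal]
    (pb : PowerBasis k (MvPolynomial σ k ⧸ I)) :
    ∃ f h w, f.Monic ∧ Irreducible f ∧ f.natDegree = pb.dim ∧ IsMonogenicPresentation I f h w := by
  obtain ⟨h, w, H⟩ := exists_of_powerBasis pb
  exact ⟨_, h, w, minpoly.monic pb.isIntegral_gen, minpoly.irreducible pb.isIntegral_gen,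
    pb.natDegree_minpoly, H⟩

end Field

end IsMonogenicPresentation

section Descent

variable {F : Type*} [CommRing F] [Algebra R F]

theorem exists_mvPolynomial_map_eq_of_coeffs_subset (A : Subalgebra R F) {p : MvPolynomial σ F}
    (hp : (p.coeffs : Set F) ⊆ A) : ∃ q, map (algebraMap A F) q = p :=
  mem_range_map_iff_coeffs_subset.2 (hp.trans_eq Subtype.range_coe.symm)

theorem exists_polynomial_map_eq_of_coeffs_subset (A : Subalgebra R F) {p : F[X]}
    (hp : (p.coeffs : Set F) ⊆ A) : ∃ q : A[X], q.map (algebraMap A F) = p :=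
  (Polynomial.mem_lifts p).1 <|
    (Polynomial.lifts_iff_coeffs_subset_range p).2 (hp.trans_eq Subtype.range_coe.symm)

theorem exists_finite_forall_mem_map_subalgebra {I : Ideal (MvPolynomial σ R)}
    {x : MvPolynomial σ F} (hx : x ∈ I.map (map (algebraMap R F))) :
    ∃ S : Set F, S.Finite ∧ ∀ A : Subalgebra R F, S ⊆ A →
      ∀ y : MvPolynomial σ A, map (algebraMap A F) y = x → y ∈ I.map (map (algebraMap R A)) := by
  suffices ∃ S : Set F, S.Finite ∧ ∀ A : Subalgebra R F, S ⊆ A →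
      ∃ y ∈ I.map (map (algebraMap R A)), map (algebraMap A F) y = x by
    obtain ⟨S, hS, hlift⟩ := this
    refine ⟨S, hS, fun A hA y hy => ?_⟩
    obtain ⟨z, hz, rfl⟩ := hlift A hA
    rwa [map_injective _ Subtype.val_injective hy]
  induction hx using Submodule.span_induction with
  | mem x hx =>
    obtain ⟨p, hp, rfl⟩ := hx
    exact ⟨∅, Set.finite_empty, fun A _ =>
      ⟨_, Ideal.mem_map_of_mem _ hp, by rw [map_map]; rfl⟩⟩
  | zero => exact ⟨∅, Set.finite_empty, fun A _ => ⟨0, zero_mem _, map_zero _⟩⟩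
  | add x₁ x₂ _ _ h₁ h₂ =>
    obtain ⟨S₁, hS₁, h₁⟩ := h₁
    obtain ⟨S₂, hS₂, h₂⟩ := h₂
    refine ⟨S₁ ∪ S₂, hS₁.union hS₂, fun A hA => ?_⟩
    obtain ⟨y₁, hy₁, rfl⟩ := h₁ A (Set.subset_union_left.trans hA)
    obtain ⟨y₂, hy₂, rfl⟩ := h₂ A (Set.subset_union_right.trans hA)
    exact ⟨y₁ + y₂, add_mem hy₁ hy₂, map_add _ _ _⟩
  | smul c x _ hx =>
    obtain ⟨S, hS, hx⟩ := hx
    refine ⟨S ∪ c.coeffs, hS.union c.coeffs.finite_toSet, fun A hA => ?_⟩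
    obtain ⟨y, hy, rfl⟩ := hx A (Set.subset_union_left.trans hA)
    obtain ⟨b, rfl⟩ :=
      exists_mvPolynomial_map_eq_of_coeffs_subset A (Set.subset_union_right.trans hA)
    exact ⟨b * y, Ideal.mul_mem_left _ b hy, map_mul _ _ _⟩

theorem IsMonogenicPresentation.exists_finite_descent [Finite σ] {I : Ideal (MvPolynomial σ R)}
    {f : F[X]} {h : σ → F[X]} {w : MvPolynomial σ F} (hf : f.Monic)
    (H : IsMonogenicPresentation (I.map (MvPolynomial.map (algebraMap R F))) f h w) :
    ∃ S : Set F, S.Finite ∧ ∀ A : Subalgebra R F, S ⊆ A →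
      ∀ f' : A[X], f'.map (algebraMap A F) = f →
        ∃ h' w', IsMonogenicPresentation (I.map (MvPolynomial.map (algebraMap R A))) f' h' w' := by
  choose Sc hSc hc using fun i => exists_finite_forall_mem_map_subalgebra (H.X_sub_aeval_mem i)
  obtain ⟨Sd, hSd, hd⟩ := exists_finite_forall_mem_map_subalgebra H.aeval_mem
  refine ⟨(⋃ i, (h i).coeffs) ∪ w.coeffs ∪ (⋃ i, Sc i) ∪ Sd,
    (((Set.finite_iUnion fun i => (h i).coeffs.finite_toSet).union w.coeffs.finite_toSet).union
      (Set.finite_iUnion hSc)).union hSd, fun A hA f' hf' => ?_⟩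
  simp only [Set.union_subset_iff, Set.iUnion_subset_iff] at hA
  obtain ⟨⟨⟨hhA, hwA⟩, hcA⟩, hdA⟩ := hA
  choose h' hh' using fun i => exists_polynomial_map_eq_of_coeffs_subset A (hhA i)
  obtain ⟨w', rfl⟩ := exists_mvPolynomial_map_eq_of_coeffs_subset A hwA
  obtain rfl : (fun i => (h' i).map (algebraMap A F)) = h := funext hh'
  subst hf'
  have hinj : Function.Injective (algebraMap A F) := Subtype.val_injective
  have hmonic : f'.Monic := Polynomial.monic_of_injective hinj hf
  refine ⟨h', w', dvd_aeval_of_mem_map fun p hp => ?_, ?_, fun i => ?_, ?_⟩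
  · rw [← Polynomial.map_dvd_map _ hinj hmonic, map_aeval_mvPolynomial, MvPolynomial.map_map]
    exact H.dvd_aeval _ (Ideal.mem_map_of_mem _ hp)
  · rw [← Polynomial.map_dvd_map _ hinj hmonic, Polynomial.map_sub, map_aeval_mvPolynomial,
      Polynomial.map_X]
    exact H.dvd_aeval_sub_X
  · exact hc i A (hcA i) _ (by rw [map_sub, map_aeval_polynomial, map_X])
  · exact hd A hdA _ (map_aeval_polynomial _ _ _)

end Descent

end MonogenicPresentation

section Specialization

open scoped Polynomial

variable {K ι : Type} [Field K]

/-- The polynomials that do not vanish at `t`, the denominators allowed in the local ring at `t`. -/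
def nonvanishingAt (t : ι → K) : Submonoid (MvPolynomial ι K) :=
  (nonZeroDivisors K).comap (eval t)

theorem mem_nonvanishingAt {t : ι → K} {b : MvPolynomial ι K} :
    b ∈ nonvanishingAt t ↔ eval t b ≠ 0 :=
  mem_nonZeroDivisors_iff_ne_zero

theorem nonvanishingAt_le_nonZeroDivisors (t : ι → K) :
    nonvanishingAt t ≤ nonZeroDivisors (MvPolynomial ι K) := fun b hb =>
  mem_nonZeroDivisors_of_ne_zero <| by
    rintro rfl
    exact mem_nonvanishingAt.1 hb (map_zero _)

/-- The rational functions `a / b` with `b(t) ≠ 0`: the local ring of `K[T]` at the point `t`,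
realized inside `K(T)`. -/
def regularSubalgebra (t : ι → K) : Subalgebra (MvPolynomial ι K) (RatFuncField K ι) :=
  Localization.subalgebra.ofField _ (nonvanishingAt t) (nonvanishingAt_le_nonZeroDivisors t)

instance (t : ι → K) : IsLocalization (nonvanishingAt t) (regularSubalgebra t) :=
  Localization.subalgebra.isLocalization_ofField _ _ _

/-- Evaluation at `t` of the rational functions regular at `t`. -/
def evalRegular (t : ι → K) : regularSubalgebra t →+* K :=
  IsLocalization.lift (M := nonvanishingAt t) (g := eval t)
    fun b => isUnit_iff_ne_zero.2 (mem_nonvanishingAt.1 b.2)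

theorem evalRegular_comp_algebraMap (t : ι → K) :
    (evalRegular t).comp (algebraMap (MvPolynomial ι K) (regularSubalgebra t)) = eval t :=
  IsLocalization.lift_comp _

theorem ratSpecializesTo_iff {t : ι → K} {x : RatFuncField K ι} {v : K} :
    RatSpecializesTo K t x v ↔ ∃ y : regularSubalgebra t, ↑y = x ∧ evalRegular t y = v := by
  have evalRegular_algebraMap (a) : evalRegular t (algebraMap _ _ a) = eval t a :=
    RingHom.congr_fun (evalRegular_comp_algebraMap t) a
  constructor
  · rintro ⟨a, b, hb, hx, hv⟩
    have hbF : algebraMap _ (RatFuncField K ι) b ≠ 0 :=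
      IsFractionRing.to_map_ne_zero_of_mem_nonZeroDivisors
        (nonvanishingAt_le_nonZeroDivisors t (mem_nonvanishingAt.2 hb))
    obtain ⟨y, hy⟩ : ∃ y : regularSubalgebra t,
        algebraMap _ (regularSubalgebra t) b * y = algebraMap _ _ a :=
      ⟨IsLocalization.mk' _ a ⟨b, mem_nonvanishingAt.2 hb⟩, IsLocalization.mk'_spec' _ _ _⟩
    refine ⟨y, mul_left_cancel₀ hbF ?_, mul_left_cancel₀ hb ?_⟩
    · exact (congrArg Subtype.val hy).trans hx.symm
    · rw [hv, ← evalRegular_algebraMap, ← map_mul, hy, evalRegular_algebraMap]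
  · rintro ⟨y, rfl, rfl⟩
    obtain ⟨⟨a, b⟩, hab⟩ := IsLocalization.surj (nonvanishingAt t) y
    rw [mul_comm] at hab
    refine ⟨a, b, mem_nonvanishingAt.1 b.2, congrArg Subtype.val hab, ?_⟩
    rw [← evalRegular_algebraMap, ← map_mul, hab, evalRegular_algebraMap]

theorem polySpecializesTo_iff {t : ι → K} {s : ℕ} {P : MvPolynomial (Fin s) (RatFuncField K ι)}
    {q : MvPolynomial (Fin s) K} :
    PolySpecializesTo K t P q ↔ ∃ P' : MvPolynomial (Fin s) (regularSubalgebra t),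
      map (algebraMap _ (RatFuncField K ι)) P' = P ∧ map (evalRegular t) P' = q := by
  simp only [PolySpecializesTo, ratSpecializesTo_iff]
  constructor
  · intro hPq
    choose y hyP hyq using hPq
    have hcoeffs : (P.coeffs : Set (RatFuncField K ι)) ⊆ regularSubalgebra t := by
      intro x hx
      obtain ⟨m, -, rfl⟩ := mem_coeffs_iff.1 hx
      exact hyP m ▸ (y m).2
    obtain ⟨P', rfl⟩ := exists_mvPolynomial_map_eq_of_coeffs_subset _ hcoeffs
    refine ⟨P', rfl, MvPolynomial.ext _ _ fun m => ?_⟩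
    rw [coeff_map, ← hyq m]
    exact congrArg _ (Subtype.ext ((hyP m).trans (coeff_map _ _ _)).symm)
  · rintro ⟨P', rfl, rfl⟩ m
    exact ⟨P'.coeff m, (coeff_map (algebraMap (regularSubalgebra t) _) _ _).symm,
      (coeff_map _ _ _).symm⟩

theorem map_uniqueAlgEquiv_symm {R R' σ : Type*} [CommSemiring R] [CommSemiring R'] [Unique σ]
    (φ : R →+* R') (f : R[X]) :
    map φ ((uniqueAlgEquiv R σ).symm f) = (uniqueAlgEquiv R' σ).symm (f.map φ) := by
  ext d
  simp only [coeff_map, coeff_uniqueAlgEquiv_symm, Polynomial.coeff_map]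

theorem exists_irreducible_polySpecializesTo_uniqueAlgEquiv_symm_iff {t : ι → K}
    {f : (RatFuncField K ι)[X]} :
    (∃ q, PolySpecializesTo K t ((uniqueAlgEquiv _ (Fin 1)).symm f) q ∧ Irreducible q) ↔
      ∃ f' : (regularSubalgebra t)[X], f'.map (algebraMap _ (RatFuncField K ι)) = f ∧
        Irreducible (f'.map (evalRegular t)) := by
  simp only [polySpecializesTo_iff,
    (uniqueAlgEquiv (regularSubalgebra t) (Fin 1)).symm.surjective.exists,
    map_uniqueAlgEquiv_symm, EmbeddingLike.apply_eq_iff_eq]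
  constructor
  · rintro ⟨_, ⟨f', hf', rfl⟩, hirr⟩
    exact ⟨f', hf', (MulEquiv.irreducible_iff (uniqueAlgEquiv K (Fin 1)).symm).1 hirr⟩
  · rintro ⟨f', hf', hirr⟩
    exact ⟨_, ⟨f', hf', rfl⟩, (MulEquiv.irreducible_iff (uniqueAlgEquiv K (Fin 1)).symm).2 hirr⟩

theorem isHilbertSubset_setOf_forall_irreducible_map {κ : Type*} [Finite κ]
    {f : κ → (RatFuncField K ι)[X]} (hf : ∀ i, Irreducible (f i)) :
    IsHilbertSubset K ι {t | ∀ i, ∃ f' : (regularSubalgebra t)[X],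
      f'.map (algebraMap _ (RatFuncField K ι)) = f i ∧ Irreducible (f'.map (evalRegular t))} := by
  let e := Finite.equivFin κ
  refine ⟨1, Nat.card κ, 1, fun j => (uniqueAlgEquiv _ (Fin 1)).symm (f (e.symm j)), fun _ => 1,
    fun j => (MulEquiv.irreducible_iff (uniqueAlgEquiv _ (Fin 1)).symm).2 (hf _),
    ⟨0, 0, by simp⟩, ?_⟩
  simp only [map_one, ne_eq, one_ne_zero, not_false_eq_true, exists_const, true_and,
    exists_irreducible_polySpecializesTo_uniqueAlgEquiv_symm_iff, e.symm.forall_congr_left,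
    Equiv.symm_symm, Equiv.symm_apply_apply]

theorem exists_irreducible_map_eq_X_sub_C_iff {t : ι → K} {x : RatFuncField K ι} :
    (∃ f' : (regularSubalgebra t)[X],
      f'.map (algebraMap _ (RatFuncField K ι)) = Polynomial.X - Polynomial.C x ∧
        Irreducible (f'.map (evalRegular t))) ↔ x ∈ regularSubalgebra t := by
  constructor
  · rintro ⟨f', hf', -⟩
    have coeff_zero : ((f'.coeff 0 : regularSubalgebra t) : RatFuncField K ι) = -x := by
      simpa using congrArg (Polynomial.coeff · 0) hf'
    exact neg_mem_iff.1 (coeff_zero ▸ (f'.coeff 0).2)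
  · intro hx
    refine ⟨Polynomial.X - Polynomial.C ⟨x, hx⟩, by simp, ?_⟩
    simpa using Polynomial.irreducible_X_sub_C (evalRegular t ⟨x, hx⟩)

theorem isHilbertSubset_setOf_subset_regularSubalgebra {S : Set (RatFuncField K ι)}
    (hS : S.Finite) {f : (RatFuncField K ι)[X]} (hf : Irreducible f) :
    IsHilbertSubset K ι {t | S ⊆ regularSubalgebra t ∧ ∃ f' : (regularSubalgebra t)[X],
      f'.map (algebraMap _ (RatFuncField K ι)) = f ∧ Irreducible (f'.map (evalRegular t))} := by
  have := hS.to_subtype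
  have hirr (i : Option S) :
      Irreducible (i.elim f fun x => Polynomial.X - Polynomial.C (x : RatFuncField K ι)) := by
    cases i with
    | none => exact hf
    | some x => exact Polynomial.irreducible_X_sub_C _
  convert isHilbertSubset_setOf_forall_irreducible_map hirr using 3 with t
  rw [and_comm]
  simp only [Option.forall, Option.elim_none, Option.elim_some,
    exists_irreducible_map_eq_X_sub_C_iff, Subtype.forall, Set.subset_def, SetLike.mem_coe]

theorem IsMonogenicPresentation.exists_isHilbertSubset {σ : Type*} [Finite σ]
    {I : Ideal (MvPolynomial σ (MvPolynomial ι K))} {f : (RatFuncField K ι)[X]}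
    {h : σ → (RatFuncField K ι)[X]} {w : MvPolynomial σ (RatFuncField K ι)}
    (H : IsMonogenicPresentation
      (I.map (MvPolynomial.map (algebraMap _ (RatFuncField K ι)))) f h w)
    (hmonic : f.Monic) (hirr : Irreducible f) :
    ∃ U : Set (ι → K), IsHilbertSubset K ι U ∧ ∀ t ∈ U,
      (I.map (MvPolynomial.map (eval t))).IsMaximal ∧
      Module.finrank K (MvPolynomial σ K ⧸ I.map (MvPolynomial.map (eval t))) = f.natDegree := by
  obtain ⟨S, hS, hdescent⟩ := H.exists_finite_descent hmonic
  refine ⟨_, isHilbertSubset_setOf_subset_regularSubalgebra hS hirr, ?_⟩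
  rintro t ⟨hSt, f', hf', hirr'⟩
  obtain ⟨h', w', H'⟩ := hdescent _ hSt f' hf'
  have hmonic' : f'.Monic := Polynomial.monic_of_injective Subtype.val_injective (hf' ▸ hmonic)
  have hmap : (I.map (MvPolynomial.map (algebraMap _ (regularSubalgebra t)))).map
      (MvPolynomial.map (evalRegular t)) = I.map (MvPolynomial.map (eval t)) := by
    rw [Ideal.map_map, ← evalRegular_comp_algebraMap]
    exact congrArg (I.map ·) (RingHom.ext (map_map _ _))
  have Ht := hmap ▸ H'.map (evalRegular t)
  refine ⟨Ht.isMaximal hirr', (Ht.finrank_quotient hirr'.ne_zero).trans ?_⟩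
  rw [hmonic'.natDegree_map, ← hf', hmonic'.natDegree_map]

/-- The identification of `R[T,Y]` with `R[T][Y]`. -/
def iterHom (R σ τ : Type*) [CommSemiring R] :
    MvPolynomial (σ ⊕ τ) R →+* MvPolynomial τ (MvPolynomial σ R) :=
  (sumAlgEquiv R τ σ).toRingHom.comp (rename Sum.swap).toRingHom

theorem map_algebraMap_comp_iterHom (K : Type) [Field K] (r s : ℕ) :
    (map (algebraMap _ _)).comp (iterHom K (Fin r) (Fin s)) = extHom K r s := by
  refine MvPolynomial.ringHom_ext (fun a => ?_) ?_
  · simp [iterHom, extHom]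
  · rintro (i | j) <;> simp [iterHom, extHom]

theorem map_eval_comp_iterHom {r : ℕ} (s : ℕ) (t : Fin r → K) :
    (map (eval t)).comp (iterHom K (Fin r) (Fin s)) = specHom K t := by
  refine MvPolynomial.ringHom_ext (fun a => ?_) ?_
  · simp [iterHom, specHom]
  · rintro (i | j) <;> simp [iterHom, specHom]

end Specialization

theorem stmt_19_general (K : Type) [Field K] (r s : ℕ)
    (pT : Ideal (MvPolynomial (Fin r ⊕ Fin s) K))
    (hmax : (Ideal.map (extHom K r s) pT).IsMaximal)
    (pb : PowerBasis (RatFuncField K (Fin r))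
      (MvPolynomial (Fin s) (RatFuncField K (Fin r)) ⧸ Ideal.map (extHom K r s) pT)) :
    ∃ H : Set (Fin r → K), IsHilbertSubset K (Fin r) H ∧ ∀ t ∈ H,
      (Ideal.map (specHom K t) pT).IsMaximal ∧
      Module.finrank K (MvPolynomial (Fin s) K ⧸ Ideal.map (specHom K t) pT) = pb.dim := by
  obtain ⟨f, h, w, hmonic, hirr, hdeg, hpres⟩ :=
    IsMonogenicPresentation.exists_monic_irreducible_of_powerBasis pb
  rw [← map_algebraMap_comp_iterHom, ← Ideal.map_map] at hpres
  obtain ⟨H, hH, hspec⟩ := hpres.exists_isHilbertSubset hmonic hirr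
  refine ⟨H, hH, fun t ht => ?_⟩
  rw [← map_eval_comp_iterHom, ← Ideal.map_map, ← hdeg]
  exact hspec t ht

/-- If `p_T ⊆ K[T,Y]` is prime with `p_T ∩ K[T] = 0` and its extension
`p̃_T` to `K(T)[Y]` is maximal with `K(T)[Y]/p̃_T` a finite separable field extension of
`K(T)` of degree `n`, then there is a Hilbert subset `H ⊆ K^r` such that for every
`t ∈ H` the specialized ideal `p_t` is maximal in `K[Y]` and `K[Y]/p_t` is a field
extension of `K` of degree `n`. -/
theorem stmt_19 (K : Type) [Field K] (r s : ℕ)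
    (pT : Ideal (MvPolynomial (Fin r ⊕ Fin s) K)) (hprime : pT.IsPrime)
    (hcap : ∀ g : MvPolynomial (Fin r) K, MvPolynomial.rename Sum.inl g ∈ pT → g = 0)
    (hmax : (Ideal.map (extHom K r s) pT).IsMaximal)
    (hsep : Algebra.IsSeparable (RatFuncField K (Fin r))
      (MvPolynomial (Fin s) (RatFuncField K (Fin r)) ⧸ Ideal.map (extHom K r s) pT))
    (hfin : Module.Finite (RatFuncField K (Fin r))
      (MvPolynomial (Fin s) (RatFuncField K (Fin r)) ⧸ Ideal.map (extHom K r s) pT))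
    (n : ℕ) (hn : 0 < n)
    (hdeg : Module.finrank (RatFuncField K (Fin r))
      (MvPolynomial (Fin s) (RatFuncField K (Fin r)) ⧸ Ideal.map (extHom K r s) pT) = n) :
    ∃ H : Set (Fin r → K), IsHilbertSubset K (Fin r) H ∧ ∀ t ∈ H,
      (Ideal.map (specHom K t) pT).IsMaximal ∧
      Module.finrank K (MvPolynomial (Fin s) K ⧸ Ideal.map (specHom K t) pT) = n := by
  let := Ideal.Quotient.field (Ideal.map (extHom K r s) pT)
  let pb := Field.powerBasisOfFiniteOfSeparable (RatFuncField K (Fin r))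
    (MvPolynomial (Fin s) (RatFuncField K (Fin r)) ⧸ Ideal.map (extHom K r s) pT)
  exact hdeg ▸ pb.finrank ▸ stmt_19_general K r s pT hmax pb

end
end
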